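/- Fix β₀ > 1. There exists c₀ ∈ (0,1) depending only on β₀ with the following property. Let μ be a probability measure on ℝⁿ whose density f is of convex form with parameter β, where β ≥ n+1, β ≥ β₀·n, and ‖f‖ ≥ 1. Then there exists an affine map u : ℝⁿ → ℝⁿ whose linear part has |determinant| = 1 such that the pushforward measure u♯μ satisfies (u♯μ)(D) ≥ c₀ⁿ, where D is the Euclidean ball in ℝⁿ centered at the origin with volume |D| = 1. -/

import Mathlib

open MeasureTheory ProbabilityTheory Real
open scoped Pointwise ENNReal

noncomputable def ent {n : ℕ} (f : EuclideanSpace ℝ (Fin n) → ℝ) : ℝ :=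
  -∫ x, f x * Real.log (f x)

noncomputable def densSup {n : ℕ} (f : EuclideanSpace ℝ (Fin n) → ℝ) : ℝ :=
  (essSup (fun x => ENNReal.ofReal (f x)) volume).toReal

def HasDensity {Ω : Type*} [MeasurableSpace Ω] (P : Measure Ω) {n : ℕ}
    (X : Ω → EuclideanSpace ℝ (Fin n)) (f : EuclideanSpace ℝ (Fin n) → ℝ) : Prop :=
  Measure.map X P = volume.withDensity (fun x => ENNReal.ofReal (f x))

def ConvexForm {n : ℕ} (f : EuclideanSpace ℝ (Fin n) → ℝ) (β : ℝ) : Prop :=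
  ∃ (S : Set (EuclideanSpace ℝ (Fin n))) (V : EuclideanSpace ℝ (Fin n) → ℝ),
    IsOpen S ∧ Convex ℝ S ∧ ConvexOn ℝ S V ∧
    (∀ x ∈ S, 0 < V x) ∧ (∀ x ∈ S, f x = V x ^ (-β)) ∧ (∀ x ∉ S, f x = 0)

def LogConcaveDensity {n : ℕ} (f : EuclideanSpace ℝ (Fin n) → ℝ) : Prop :=
  (∀ x, 0 ≤ f x) ∧
  ∀ x y : EuclideanSpace ℝ (Fin n), ∀ t : ℝ, 0 < t → t < 1 →
    f x ^ t * f y ^ (1 - t) ≤ f (t • x + (1 - t) • y)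

def KConcave {n : ℕ} (μ : Measure (EuclideanSpace ℝ (Fin n))) (κ : ℝ) : Prop :=
  ∀ A B : Set (EuclideanSpace ℝ (Fin n)), MeasurableSet A → MeasurableSet B →
    0 < μ A → 0 < μ B → ∀ t : ℝ, 0 < t → t < 1 →
      (t * (μ A).toReal ^ κ + (1 - t) * (μ B).toReal ^ κ) ^ (1/κ) ≤
        (μ (t • A + (1 - t) • B)).toReal

def IsConvexBody {n : ℕ} (A : Set (EuclideanSpace ℝ (Fin n))) : Prop :=
  Convex ℝ A ∧ IsCompact A ∧ (interior A).Nonempty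

def IsUniformOn {Ω : Type*} [MeasurableSpace Ω] (P : Measure Ω) {n : ℕ}
    (X : Ω → EuclideanSpace ℝ (Fin n)) (A : Set (EuclideanSpace ℝ (Fin n))) : Prop :=
  Measure.map X P = (volume A)⁻¹ • volume.restrict A

/-!
Let `x₀` nearly maximize `f = V ^ (-β)` and let `Λ` be the set where `V < V x₀ * (1 + n / β)`. On
`Λ` the density stays above `exp (-n) * f x₀`. Convexity of `V` bounds the volume of the `s` times
thicker sublevel set by `s ^ n * |Λ|`, while by Bernoulli's inequality `f` has dropped there by a
factor `(s / β₀) ^ (β₀ * n)`. As `β₀ > 1`, summing over dyadic shells gives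
`1 ≤ C ^ n * f x₀ * |Λ|`, so every exponential proportion of `Λ` carries exponentially large mass,
and `|Λ| ≤ (2 * e) ^ n` since `f x₀ ≥ 1 / 2`.

It remains to find an `M`-position for a convex body `K`, through exponential tilts as in Klartag's
work on the slicing problem. The barycentre of the tilt of `K` in direction `ξ` is an injective
function of `ξ` with values in `K` whose derivative is the covariance, so some `ξ` in `n • (K - K)°`
has `det Cov * |n • (K - K)°| ≤ |K|`. For such `ξ` the tilted density oscillates by at most `exp n`.
In the isotropic position of the tilted measure three quarters of its mass lie in a ball of radius
`2 * √n`, and `|n • (K - K)°| ≥ c ^ n`: packing bounds cover `K` by few balls, which gives the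
polars of `(K - K) ∩ r B` large Gaussian measure, and the Gaussian measure compares the volumes of
these polars along the scales `r = 2 ^ (6 * k) * √n`. Hence `|K|` is large in this position, and a
ball of comparable volume captures an exponential proportion of `K`. Contracting towards a point of
the captured set replaces this ball by the ball of volume one.
-/

namespace MPosition

open Module Metric
open scoped NNReal

section Gaussian

variable {E : Type*} [NormedAddCommGroup E] [InnerProductSpace ℝ E] [FiniteDimensional ℝ E]
  [MeasurableSpace E] [BorelSpace E]

theorem integrable_exp_neg_sq_norm_div_two :
    Integrable fun x : E => exp (-(‖x‖ ^ 2 / 2)) := by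
  by_contra h
  have hint := GaussianFourier.integral_rexp_neg_mul_sq_norm (V := E) (b := 1 / 2) (by norm_num)
  simp_rw [show ∀ x : E, -(1 / 2) * ‖x‖ ^ 2 = -(‖x‖ ^ 2 / 2) from fun x => by ring,
    integral_undef h] at hint
  have : 0 < (π / (1 / 2)) ^ ((finrank ℝ E : ℝ) / 2) := by positivity
  exact this.ne hint

variable (E) in
theorem stdGaussian_eq_withDensity :
    stdGaussian E = volume.withDensity fun x =>
      ENNReal.ofReal (((2 * π) ^ ((finrank ℝ E : ℝ) / 2))⁻¹ * exp (-(‖x‖ ^ 2 / 2))) := by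
  have hint : Integrable fun x : E => ((2 * π) ^ ((finrank ℝ E : ℝ) / 2))⁻¹ *
      exp (-(‖x‖ ^ 2 / 2)) := integrable_exp_neg_sq_norm_div_two.const_mul _
  have := isFiniteMeasure_withDensity_ofReal hint.hasFiniteIntegral
  refine Measure.ext_of_charFun (funext fun t => ?_)
  have hb : (0 : ℝ) < (1 / 2 : ℂ).re := by norm_num
  have hfourier := GaussianFourier.integral_cexp_neg_mul_sq_norm_add hb Complex.I t
  rw [charFun_stdGaussian, charFun_apply,
    integral_withDensity_eq_integral_toReal_smul (by fun_prop) (by simp)]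
  have hintegrand (x : E) : (ENNReal.ofReal (((2 * π) ^ ((finrank ℝ E : ℝ) / 2))⁻¹ *
        exp (-(‖x‖ ^ 2 / 2)))).toReal • Complex.exp (inner ℝ x t * Complex.I) =
      (((2 * π) ^ ((finrank ℝ E : ℝ) / 2))⁻¹ : ℝ) *
        Complex.exp (-(1 / 2) * ‖x‖ ^ 2 + Complex.I * inner ℝ t x) := by
    rw [ENNReal.toReal_ofReal (by positivity), Complex.real_smul, Complex.exp_add]
    push_cast
    rw [real_inner_comm x t, mul_assoc]
    ring_nf
  simp_rw [hintegrand, integral_const_mul, hfourier]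
  rw [show (π / (1 / 2 : ℂ)) = ((2 * π : ℝ) : ℂ) by push_cast; ring,
    show (finrank ℝ E / 2 : ℂ) = ((finrank ℝ E / 2 : ℝ) : ℂ) by push_cast; rfl,
    ← Complex.ofReal_cpow (by positivity), ← mul_assoc, ← Complex.ofReal_mul,
    inv_mul_cancel₀ (by positivity), Complex.I_sq]
  norm_num

instance : (stdGaussian E).IsNegInvariant where
  neg_eq_self := stdGaussian_map (LinearIsometryEquiv.neg ℝ)

theorem stdGaussian_map_add_right (w : E) :
    (stdGaussian E).map (· + w) = (stdGaussian E).withDensity fun x =>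
      ENNReal.ofReal (exp (inner ℝ x w - ‖w‖ ^ 2 / 2)) := by
  ext A hA
  have hshift : MeasurableSet ((· + w) ⁻¹' A) := measurable_add_const w hA
  rw [Measure.map_apply (by fun_prop) hA, withDensity_apply _ hA, stdGaussian_eq_withDensity,
    withDensity_apply _ hshift,
    setLIntegral_withDensity_eq_setLIntegral_mul _ (by fun_prop) (by fun_prop) hA,
    ← (measurePreserving_add_right volume w).setLIntegral_comp_preimage hA (by fun_prop)]
  refine setLIntegral_congr_fun hshift fun x _ => ?_
  simp only [Pi.mul_apply]
  rw [← ENNReal.ofReal_mul (by positivity), mul_assoc, ← exp_add, norm_add_sq_real,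
    inner_add_left, real_inner_self_eq_norm_sq]
  ring_nf

theorem measure_le_setLIntegral_exp_of_neg_eq {ν : Measure E} [ν.IsNegInvariant] {A : Set E}
    (hA : MeasurableSet A) (hneg : -A = A) (w : E) :
    ν A ≤ ∫⁻ x in A, ENNReal.ofReal (exp (inner ℝ x w)) ∂ν := by
  have hflip : ∫⁻ x in A, ENNReal.ofReal (exp (inner ℝ x w)) ∂ν =
      ∫⁻ x in A, ENNReal.ofReal (exp (-inner ℝ x w)) ∂ν := by
    have h := (Measure.measurePreserving_neg ν).setLIntegral_comp_preimage hA
      (f := fun x => ENNReal.ofReal (exp (inner ℝ x w))) (by fun_prop)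
    rw [← h, show Neg.neg ⁻¹' A = A from hneg]
    simp only [inner_neg_left]
  have htwo : 2 * ν A ≤ 2 * ∫⁻ x in A, ENNReal.ofReal (exp (inner ℝ x w)) ∂ν := by
    calc 2 * ν A = ∫⁻ _ in A, 2 ∂ν := by simp
      _ ≤ ∫⁻ x in A, (ENNReal.ofReal (exp (inner ℝ x w)) +
            ENNReal.ofReal (exp (-inner ℝ x w))) ∂ν := by
          refine lintegral_mono fun x => ?_
          rw [← ENNReal.ofReal_add (by positivity) (by positivity)]
          refine ENNReal.ofReal_ofNat 2 ▸ ENNReal.ofReal_le_ofReal ?_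
          linarith [add_one_le_exp (inner ℝ x w : ℝ), add_one_le_exp (-inner ℝ x w : ℝ)]
      _ = _ := by rw [lintegral_add_left (by fun_prop), ← hflip, two_mul]
  exact (ENNReal.mul_le_mul_iff_right two_ne_zero ENNReal.ofNat_ne_top).1 htwo

theorem exp_mul_stdGaussian_le_stdGaussian_preimage_add {A : Set E} (hA : MeasurableSet A)
    (hneg : -A = A) (w : E) :
    ENNReal.ofReal (exp (-(‖w‖ ^ 2 / 2))) * stdGaussian E A ≤
      stdGaussian E ((· + w) ⁻¹' A) := by
  rw [← Measure.map_apply (by fun_prop) hA, stdGaussian_map_add_right, withDensity_apply _ hA]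
  calc _ ≤ ENNReal.ofReal (exp (-(‖w‖ ^ 2 / 2))) *
        ∫⁻ x in A, ENNReal.ofReal (exp (inner ℝ x w)) ∂stdGaussian E := by
        gcongr; exact measure_le_setLIntegral_exp_of_neg_eq hA hneg w
    _ = _ := by
        rw [← lintegral_const_mul _ (by fun_prop)]
        refine lintegral_congr fun x => ?_
        rw [← ENNReal.ofReal_mul (by positivity), ← exp_add]
        ring_nf

theorem hasSubgaussianMGF_inner_stdGaussian {q : E} {r : ℝ≥0} (hq : ‖q‖ ≤ r) :
    HasSubgaussianMGF (inner ℝ q) (r ^ 2) (stdGaussian E) := by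
  have hmap : (stdGaussian E).map (inner ℝ q) = gaussianReal 0 (‖q‖₊ ^ 2) := by
    have h := IsGaussian.map_eq_gaussianReal (μ := stdGaussian E) (innerSL ℝ q)
    rw [integral_strongDual_stdGaussian, variance_dual_stdGaussian, innerSL_apply_norm] at h
    convert! h using 2
    ext
    simp
  refine ⟨fun t => ?_, fun t => ?_⟩
  · have h := integrable_exp_mul_gaussianReal (μ := 0) (v := ‖q‖₊ ^ 2) t
    rw [← hmap] at h
    exact h.comp_measurable (by fun_prop)
  · rw [mgf_gaussianReal hmap, zero_mul, zero_add]
    push_cast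
    gcongr

theorem stdGaussian_inner_ge_le {q : E} {a r : ℝ} (ha : 0 ≤ a) (hr : 0 ≤ r) (hq : ‖q‖ ≤ r) :
    stdGaussian E {x | a ≤ inner ℝ q x} ≤ ENNReal.ofReal (exp (-(a ^ 2 / (2 * r ^ 2)))) := by
  lift r to ℝ≥0 using hr
  rw [← ofReal_measureReal]
  refine ENNReal.ofReal_le_ofReal
    (((hasSubgaussianMGF_inner_stdGaussian hq).measure_ge_le ha).trans_eq ?_)
  rw [neg_div, NNReal.coe_pow]

theorem integral_sq_norm_stdGaussian : ∫ x, ‖x‖ ^ 2 ∂stdGaussian E = finrank ℝ E := by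
  have hsq (i : Fin (finrank ℝ E)) :
      ∫ x, inner ℝ (stdOrthonormalBasis ℝ E i) x ^ 2 ∂stdGaussian E = 1 := by
    have hmean := integral_strongDual_stdGaussian (innerSL ℝ (stdOrthonormalBasis ℝ E i))
    have hvar := variance_dual_stdGaussian (innerSL ℝ (stdOrthonormalBasis ℝ E i))
    rw [variance_of_integral_eq_zero (by fun_prop) hmean] at hvar
    simpa using hvar
  simp_rw [← (stdOrthonormalBasis ℝ E).sum_sq_inner_right]
  rw [integral_finsetSum]
  · simp [hsq]
  · exact fun i _ =>
      ((hasSubgaussianMGF_inner_stdGaussian (r := 1) (by simp)).memLp 2).integrable_sq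

theorem stdGaussian_norm_ge_le [Nontrivial E] :
    stdGaussian E {x | 3 * √(finrank ℝ E) ≤ ‖x‖} ≤ ENNReal.ofReal (1 / 4) := by
  have hn : (0 : ℝ) < finrank ℝ E := by exact_mod_cast finrank_pos
  have hmarkov := mul_meas_ge_le_integral_of_nonneg (μ := stdGaussian E)
    (f := fun x : E => ‖x‖ ^ 2) (ae_of_all _ fun x => by positivity)
    (IsGaussian.memLp_two_id.integrable_norm_pow two_ne_zero) (9 * finrank ℝ E)
  rw [integral_sq_norm_stdGaussian] at hmarkov
  have hsub : {x : E | 3 * √(finrank ℝ E) ≤ ‖x‖} ⊆ {x | 9 * finrank ℝ E ≤ ‖x‖ ^ 2} := by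
    intro x (hx : 3 * √(finrank ℝ E) ≤ ‖x‖)
    calc 9 * finrank ℝ E = (3 * √(finrank ℝ E)) ^ 2 := by
          rw [mul_pow, sq_sqrt hn.le]; norm_num
      _ ≤ ‖x‖ ^ 2 := by gcongr
  refine (measure_mono hsub).trans ?_
  rw [← ofReal_measureReal]
  refine ENNReal.ofReal_le_ofReal ?_
  nlinarith

end Gaussian

section VolumeComparison

variable {E : Type*} [NormedAddCommGroup E] [InnerProductSpace ℝ E] [FiniteDimensional ℝ E]
  [MeasurableSpace E] [BorelSpace E]

theorem lintegral_measure_preimage_const_add_smul (ν : Measure E) [IsProbabilityMeasure ν]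
    {D : Set E} (hD : MeasurableSet D) (ε : ℝ) :
    ∫⁻ η, ν {x | η + ε • x ∈ D} = volume D := by
  have hD' : MeasurableSet {p : E × E | p.1 + ε • p.2 ∈ D} :=
    (by fun_prop : Measurable fun p : E × E => p.1 + ε • p.2) hD
  calc ∫⁻ η, ν {x | η + ε • x ∈ D} = (volume.prod ν) {p : E × E | p.1 + ε • p.2 ∈ D} :=
        (Measure.prod_apply hD').symm
    _ = ∫⁻ x, volume ((· + ε • x) ⁻¹' D) ∂ν := Measure.prod_apply_symm hD'
    _ = volume D := by simp

theorem exp_mul_stdGaussian_smul_le_of_mem_add {A : Set E} (hA : IsClosed A)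
    (hconv : Convex ℝ A) (hneg : -A = A) {a w : E} {ρ δ l : ℝ} (hδ : 0 < δ) (hl : 0 < l)
    (ha : a ∈ A) (hw : ‖w‖ ≤ ρ) :
    ENNReal.ofReal (exp (-(ρ ^ 2 * l ^ 2 / (2 * δ ^ 2)))) * stdGaussian E (l • A) ≤
      stdGaussian E {x | a + w + (δ / l) • x ∈ (1 + δ) • A} := by
  have hsub : (· + (l / δ) • w) ⁻¹' (l • A) ⊆ {x | a + w + (δ / l) • x ∈ (1 + δ) • A} := by
    rintro x ⟨a', ha', hx : l • a' = x + (l / δ) • w⟩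
    have hshift : w + (δ / l) • x = δ • a' := by
      rw [show δ • a' = (δ / l) • (l • a') by rw [smul_smul, div_mul_cancel₀ _ hl.ne'], hx,
        smul_add, smul_smul, div_mul_div_cancel₀ hl.ne', div_self hδ.ne', one_smul, add_comm]
    rw [Set.mem_ofPred_eq, add_assoc, hshift, hconv.add_smul zero_le_one hδ.le, one_smul]
    exact Set.add_mem_add ha (Set.smul_mem_smul_set ha')
  have hnorm : ‖(l / δ) • w‖ ^ 2 / 2 ≤ ρ ^ 2 * l ^ 2 / (2 * δ ^ 2) := by
    rw [norm_smul, norm_of_nonneg (by positivity)]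
    calc (l / δ * ‖w‖) ^ 2 / 2 ≤ (l / δ * ρ) ^ 2 / 2 := by gcongr
      _ = ρ ^ 2 * l ^ 2 / (2 * δ ^ 2) := by field_simp
  have hlneg : -(l • A) = l • A := by rw [← Set.smul_set_neg, hneg]
  calc _ ≤ ENNReal.ofReal (exp (-(‖(l / δ) • w‖ ^ 2 / 2))) * stdGaussian E (l • A) := by gcongr
    _ ≤ stdGaussian E ((· + (l / δ) • w) ⁻¹' (l • A)) :=
        exp_mul_stdGaussian_le_stdGaussian_preimage_add (hA.smul₀ l).measurableSet hlneg _
    _ ≤ _ := measure_mono hsub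

-- Smear `η ∈ B` by a small Gaussian vector: if `η` is within `ρ` of `A`, then the result lands in
-- `(1 + δ) • A` with probability bounded below. Integrating over `η` compares the two volumes.
theorem volume_le_of_subset_add_closedBall {A B : Set E} (hA : IsClosed A) (hconv : Convex ℝ A)
    (hneg : -A = A) (hB : MeasurableSet B) {ρ δ l : ℝ} (hδ : 0 < δ) (hl : 0 < l)
    (hBA : B ⊆ A + closedBall 0 ρ) (hgauss : ENNReal.ofReal (1 / 2) ≤ stdGaussian E (l • A)) :
    volume B ≤ ENNReal.ofReal
      (2 * (1 + δ) ^ finrank ℝ E * exp (ρ ^ 2 * l ^ 2 / (2 * δ ^ 2))) * volume A := by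
  set t := ρ ^ 2 * l ^ 2 / (2 * δ ^ 2)
  have hpoint : ∀ η ∈ B, ENNReal.ofReal (exp (-t) * (1 / 2)) ≤
      stdGaussian E {x | η + (δ / l) • x ∈ (1 + δ) • A} := by
    intro η hη
    obtain ⟨a, ha, w, hw, rfl⟩ := hBA hη
    rw [ENNReal.ofReal_mul (by positivity)]
    exact (mul_le_mul_right hgauss _).trans
      (exp_mul_stdGaussian_smul_le_of_mem_add hA hconv hneg hδ hl ha (by simpa using hw))
  have hint : ENNReal.ofReal (exp (-t) * (1 / 2)) * volume B ≤ volume ((1 + δ) • A) := by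
    rw [← setLIntegral_const, ← lintegral_measure_preimage_const_add_smul (stdGaussian E)
      (hA.smul₀ (1 + δ)).measurableSet (δ / l)]
    exact (setLIntegral_mono' hB hpoint).trans (setLIntegral_le_lintegral _ _)
  rw [Measure.addHaar_smul_of_nonneg _ (by positivity)] at hint
  calc volume B
      = ENNReal.ofReal (2 * exp t) * (ENNReal.ofReal (exp (-t) * (1 / 2)) * volume B) := by
        rw [← mul_assoc, ← ENNReal.ofReal_mul (by positivity),
          show 2 * exp t * (exp (-t) * (1 / 2)) = exp t * exp (-t) by ring, ← exp_add]
        simp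
    _ ≤ ENNReal.ofReal (2 * exp t) *
          (ENNReal.ofReal ((1 + δ) ^ finrank ℝ E) * volume A) := by gcongr
    _ = _ := by
        rw [← mul_assoc, ← ENNReal.ofReal_mul (by positivity)]
        ring_nf

end VolumeComparison

section Polar

variable {E : Type*} [NormedAddCommGroup E] [InnerProductSpace ℝ E]

theorem isClosed_polar (S : Set E) : IsClosed ((innerₗ E).polar S) := by
  rw [LinearMap.polar_eq_iInter]
  exact isClosed_biInter fun x _ =>
    isClosed_le (by simp only [innerₗ_apply_apply]; fun_prop) continuous_const

theorem convex_polar (S : Set E) : Convex ℝ ((innerₗ E).polar S) := by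
  rw [LinearMap.polar_eq_iInter]
  exact convex_iInter₂ fun x _ =>
    by simpa [Set.preimage] using (convex_closedBall (0 : ℝ) 1).linear_preimage (innerₗ E x)

theorem neg_polar (S : Set E) : -(innerₗ E).polar S = (innerₗ E).polar S := by
  ext η
  simp [LinearMap.polar_mem_iff]

theorem polar_polar_eq [CompleteSpace E] {A : Set E} (hA : IsClosed A) (hconv : Convex ℝ A)
    (hneg : -A = A) (h0 : 0 ∈ A) : (innerₗ E).polar ((innerₗ E).polar A) = A := by
  refine Set.Subset.antisymm (fun x hx => ?_) (by simpa using (innerₗ E).subset_bipolar A)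
  by_contra hxA
  obtain ⟨f, u, hfA, hfx⟩ := geometric_hahn_banach_closed_point hconv hA hxA
  have hu : 0 < u := by simpa using hfA 0 h0
  set q := u⁻¹ • (InnerProductSpace.toDual ℝ E).symm f
  have hq (y : E) : inner ℝ q y = u⁻¹ * f y := by simp [q, inner_smul_left]
  have hqA : q ∈ (innerₗ E).polar A := by
    intro a ha
    have hfa := hfA a ha
    have hfa' := hfA (-a) (by rwa [← Set.mem_neg, hneg])
    rw [map_neg] at hfa'
    rw [innerₗ_apply_apply, real_inner_comm, hq, norm_mul, norm_inv, norm_of_nonneg hu.le,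
      inv_mul_le_one₀ hu, Real.norm_eq_abs, abs_le]
    constructor <;> linarith
  have hle := hx q hqA
  rw [innerₗ_apply_apply, hq, Real.norm_eq_abs] at hle
  have := (le_abs_self _).trans hle
  rw [inv_mul_le_one₀ hu] at this
  linarith

theorem polar_closedBall_subset {r : ℝ} (hr : 0 < r) :
    (innerₗ E).polar (closedBall 0 r) ⊆ closedBall 0 r⁻¹ := by
  intro η hη
  rw [mem_closedBall_zero_iff]
  rcases eq_or_ne η 0 with rfl | hη0
  · simp [hr.le]
  have hpos : 0 < ‖η‖ := norm_pos_iff.2 hη0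
  have h := hη ((r / ‖η‖) • η) (by
    rw [mem_closedBall_zero_iff, norm_smul, norm_of_nonneg (by positivity),
      div_mul_cancel₀ _ hpos.ne'])
  rw [innerₗ_apply_apply, inner_smul_left, real_inner_self_eq_norm_sq, conj_trivial,
    norm_of_nonneg (by positivity), div_mul_eq_mul_div, div_le_one hpos] at h
  rw [le_inv_comm₀ hpos hr, ← one_div, le_div_iff₀ hpos]
  nlinarith

theorem polar_inter_closedBall_subset [FiniteDimensional ℝ E] {A : Set E} (hA : IsClosed A)
    (hconv : Convex ℝ A) (hneg : -A = A) (h0 : 0 ∈ A) {r : ℝ} (hr : 0 < r) :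
    (innerₗ E).polar (A ∩ closedBall 0 r) ⊆ (innerₗ E).polar A + closedBall 0 r⁻¹ := by
  have := FiniteDimensional.complete ℝ E
  set C := (innerₗ E).polar A + closedBall 0 r⁻¹
  have h0ball : (0 : E) ∈ closedBall 0 r⁻¹ := mem_closedBall_self (by positivity)
  have hC : IsClosed C := (isClosed_polar A).add_right_of_isCompact (isCompact_closedBall _ _)
  have hCneg : -C = C := by rw [neg_add, neg_polar, neg_closedBall, neg_zero]
  have hC0 : 0 ∈ C := ⟨0, (innerₗ E).zero_mem_polar A, 0, h0ball, add_zero 0⟩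
  have hpolarC : (innerₗ E).polar C ⊆ A ∩ closedBall 0 r := by
    refine Set.subset_inter ?_ ?_
    · rw [← polar_polar_eq hA hconv hneg h0]
      exact (innerₗ E).polar_antitone (Set.subset_add_left _ h0ball)
    · rw [← inv_inv r]
      exact ((innerₗ E).polar_antitone (Set.subset_add_right _ ((innerₗ E).zero_mem_polar A))).trans
        (polar_closedBall_subset (by positivity))
  rw [← polar_polar_eq hC ((convex_polar A).add (convex_closedBall _ _)) hCneg hC0]
  exact (innerₗ E).polar_antitone hpolarC

theorem polar_sub_inter_closedBall_subset [FiniteDimensional ℝ E] {K : Set E} (hK : IsCompact K)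
    (hconv : Convex ℝ K) (hne : K.Nonempty) {r r' : ℝ} (hr : 0 < r) (hrr' : r ≤ r') :
    (innerₗ E).polar ((K - K) ∩ closedBall 0 r) ⊆
      (innerₗ E).polar ((K - K) ∩ closedBall 0 r') + closedBall 0 r⁻¹ := by
  have := polar_inter_closedBall_subset (A := (K - K) ∩ closedBall 0 r')
    ((sub_eq_add_neg K K ▸ hK.add hK.neg).isClosed.inter isClosed_closedBall)
    ((hconv.sub hconv).inter (convex_closedBall _ _))
    (by rw [Set.inter_neg, neg_sub, neg_closedBall, neg_zero])
    ⟨hne.zero_mem_sub, mem_closedBall_self (hr.le.trans hrr')⟩ hr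
  rwa [Set.inter_assoc, Set.inter_eq_right.2 (closedBall_subset_closedBall hrr')] at this

end Polar

section Covering

theorem exists_finset_card_le_of_forall_separated {X : Type*} [PseudoMetricSpace X] {K : Set X}
    {ε c : ℝ} (hε : 0 ≤ ε)
    (hK : ∀ S : Finset X, ↑S ⊆ K → (S : Set X).Pairwise (ε < dist · ·) → (S.card : ℝ) ≤ c) :
    ∃ S : Finset X, (S.card : ℝ) ≤ c ∧ ∀ y ∈ K, ∃ x ∈ S, dist y x ≤ ε := by
  lift ε to ℝ≥0 using hε
  have hsep {S : Set X} : IsSeparated ε S ↔ S.Pairwise (ε < dist · ·) := by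
    simp only [IsSeparated, edist_nndist, ENNReal.coe_lt_coe, ← NNReal.coe_lt_coe, coe_nndist]
  have hpack : packingNumber ε K ≤ ⌊c⌋₊ := by
    refine iSup₂_le fun S hS => iSup_le fun hSsep => ?_
    by_contra! hlarge
    obtain ⟨T, hTS, hT⟩ := Set.exists_subset_encard_eq (Order.add_one_le_of_lt hlarge)
    have hTfin : T.Finite := Set.finite_of_encard_eq_coe (k := ⌊c⌋₊ + 1) (by simpa using hT)
    lift T to Finset X using hTfin
    rw [Set.encard_coe_eq_coe_finsetCard] at hT
    have hcard : T.card = ⌊c⌋₊ + 1 := by exact_mod_cast hT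
    have := Nat.le_floor (hK T (hTS.trans hS) (hsep.1 (hSsep.subset hTS)))
    lia
  have hfin : packingNumber ε K ≠ ⊤ := ne_top_of_le_ne_top (by simp) hpack
  have hmax := encard_maximalSeparatedSet hfin
  have hmaxfin : (maximalSeparatedSet ε K).Finite := Set.encard_ne_top_iff.1 (hmax ▸ hfin)
  refine ⟨hmaxfin.toFinset, hK _ ?_ ?_, fun y hy => ?_⟩
  · simpa using maximalSeparatedSet_subset
  · simpa using hsep.1 isSeparated_maximalSeparatedSet
  · obtain ⟨x, hx, hyx⟩ := isCover_maximalSeparatedSet hfin hy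
    refine ⟨x, by simpa using hx, ?_⟩
    exact edist_le_coe.1 hyx

theorem exists_finset_subset_of_forall_dist_le {X : Type*} [PseudoMetricSpace X] {Q : Set X}
    {C : Finset X} {δ : ℝ} (hC : ∀ q ∈ Q, ∃ c ∈ C, dist q c ≤ δ) :
    ∃ R : Finset X, ↑R ⊆ Q ∧ R.card ≤ C.card ∧ ∀ q ∈ Q, ∃ r ∈ R, dist q r ≤ 2 * δ := by
  classical
  choose! f hf using fun c (hc : ∃ q ∈ Q, dist q c ≤ δ) => hc
  refine ⟨{c ∈ C | ∃ q ∈ Q, dist q c ≤ δ}.image f, ?_, ?_, fun q hq => ?_⟩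
  · intro x hx
    obtain ⟨c, hc, rfl⟩ := Finset.mem_image.1 hx
    exact (hf c (Finset.mem_filter.1 hc).2).1
  · exact Finset.card_image_le.trans (Finset.card_filter_le _ _)
  · obtain ⟨c, hc, hqc⟩ := hC q hq
    have hcell : ∃ q ∈ Q, dist q c ≤ δ := ⟨q, hq, hqc⟩
    refine ⟨f c, Finset.mem_image_of_mem f (Finset.mem_filter.2 ⟨hc, hcell⟩), ?_⟩
    linarith [dist_triangle_right q (f c) c, (hf c hcell).2]

variable {E : Type*} [NormedAddCommGroup E] [InnerProductSpace ℝ E]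

theorem disjoint_image_homothety {A : Set E} {b x y : E} {r s : ℝ} (hA : A ⊆ closedBall b r)
    (hs0 : 0 ≤ s) (hs1 : s ≤ 1) (hxy : 2 * r < s * dist x y) :
    Disjoint (AffineMap.homothety x (1 - s) '' A) (AffineMap.homothety y (1 - s) '' A) := by
  rw [Set.disjoint_left]
  rintro _ ⟨a, ha, rfl⟩ ⟨a', ha', heq⟩
  simp only [AffineMap.homothety_apply, vsub_eq_sub, vadd_eq_add] at heq
  have hvec : s • (x - y) = (1 - s) • (a' - a) := by
    rw [← sub_eq_zero] at heq ⊢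
    rw [← neg_eq_zero, ← heq]
    module
  have hdist : s * dist x y = (1 - s) * dist a' a := by
    simpa [norm_smul, abs_of_nonneg, hs0, hs1, dist_eq_norm] using congrArg norm hvec
  have hdiam : dist a' a ≤ 2 * r := by
    linarith [dist_triangle_right a' a b, mem_closedBall.1 (hA ha), mem_closedBall.1 (hA ha')]
  nlinarith [dist_nonneg (x := a') (y := a)]

variable [MeasurableSpace E]

/-- Contracting a subset of `K` by the ratio `1 - s` towards a point of `K` multiplies its
`ν`-measure by at least `exp (-3 s n)`. For exponentially tilted uniform measures this stands in
for log-concavity, and it is stable under linear maps. -/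
def HasContractionBound (ν : Measure E) (K : Set E) : Prop :=
  ∀ x ∈ K, ∀ s : ℝ, 0 ≤ s → s ≤ 1 / 2 → ∀ A ⊆ K, MeasurableSet A →
    ENNReal.ofReal (exp (-(3 * s * finrank ℝ E))) * ν A ≤ ν (AffineMap.homothety x (1 - s) '' A)

/-- `ν` is a measure on the convex body `K` which satisfies the contraction bound and puts three
quarters of its mass in a ball of radius `2 √n`: this is all that the covering argument needs to
know about an exponentially tilted uniform measure. -/
structure IsConcentrated (ν : Measure E) (K : Set E) (b : E) : Prop where
  isCompact : IsCompact K
  convex : Convex ℝ K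
  contraction : HasContractionBound ν K
  mass : ENNReal.ofReal (3 / 4) ≤ ν (K ∩ closedBall b (2 * √(finrank ℝ E)))

namespace IsConcentrated

variable [BorelSpace E] {ν : Measure E} [IsProbabilityMeasure ν] {K : Set E} {b : E}

theorem card_le_of_separated [FiniteDimensional ℝ E] [Nontrivial E] (h : IsConcentrated ν K b)
    {τ : ℝ} (hτ : 8 ≤ τ) {X : Finset E} (hXK : ↑X ⊆ K)
    (hX : (X : Set E).Pairwise (τ * √(finrank ℝ E) < dist · ·)) :
    (X.card : ℝ) ≤ 4 / 3 * exp (12 * finrank ℝ E / τ) := by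
  have hn : (0 : ℝ) < √(finrank ℝ E) := sqrt_pos.2 (by exact_mod_cast finrank_pos)
  have hτ0 : 0 < τ := by linarith
  set s := 4 / τ with hs
  have hs0 : 0 ≤ s := by positivity
  have hs1 : s ≤ 1 / 2 := by rw [hs, div_le_iff₀ hτ0]; linarith
  set A := K ∩ closedBall b (2 * √(finrank ℝ E))
  have hA : IsCompact A := h.isCompact.inter_right isClosed_closedBall
  have hdisj : (X : Set E).PairwiseDisjoint fun x => AffineMap.homothety x (1 - s) '' A := by
    intro x hx y hy hxy
    refine disjoint_image_homothety Set.inter_subset_right hs0 (by linarith) ?_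
    calc 2 * (2 * √(finrank ℝ E)) = s * (τ * √(finrank ℝ E)) := by rw [hs]; field_simp; norm_num
      _ < s * dist x y := by gcongr; exact hX hx hy hxy
  have himage (x : E) : MeasurableSet (AffineMap.homothety x (1 - s) '' A) :=
    (hA.image (AffineMap.homothety_continuous x (1 - s))).measurableSet
  have hsum : X.card * (ENNReal.ofReal (exp (-(3 * s * finrank ℝ E))) * ν A) ≤ 1 := by
    rw [← nsmul_eq_mul, ← Finset.sum_const]
    calc _ ≤ ∑ x ∈ X, ν (AffineMap.homothety x (1 - s) '' A) := Finset.sum_le_sum fun x hx =>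
          h.contraction x (hXK hx) s hs0 hs1 A Set.inter_subset_left hA.measurableSet
      _ = ν (⋃ x ∈ X, AffineMap.homothety x (1 - s) '' A) :=
          (measure_biUnion_finset hdisj fun x _ => himage x).symm
      _ ≤ 1 := prob_le_one
  have hreal : X.card * (exp (-(3 * s * finrank ℝ E)) * (3 / 4)) ≤ 1 := by
    rw [← ENNReal.ofReal_le_ofReal_iff zero_le_one, ENNReal.ofReal_mul (by positivity),
      ENNReal.ofReal_mul (by positivity), ENNReal.ofReal_natCast, ENNReal.ofReal_one]
    exact le_trans (by gcongr; exact h.mass) hsum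
  rw [show 12 * finrank ℝ E / τ = 3 * s * finrank ℝ E by rw [hs]; ring]
  rw [exp_neg, inv_mul_eq_div, ← mul_div_assoc, div_le_one (by positivity)] at hreal
  linarith

theorem exists_finset_net [FiniteDimensional ℝ E] [Nontrivial E] (h : IsConcentrated ν K b)
    {τ : ℝ} (hτ : 8 ≤ τ) :
    ∃ X : Finset E, (X.card : ℝ) ≤ 4 / 3 * exp (12 * finrank ℝ E / τ) ∧
      ∀ y ∈ K, ∃ x ∈ X, dist y x ≤ τ * √(finrank ℝ E) :=
  exists_finset_card_le_of_forall_separated (by positivity)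
    fun _ hXK hX => h.card_le_of_separated hτ hXK hX

theorem dist_le [FiniteDimensional ℝ E] [Nontrivial E] (h : IsConcentrated ν K b) {x y : E}
    (hx : x ∈ K) (hy : y ∈ K) : dist x y ≤ 36 * finrank ℝ E * √(finrank ℝ E) := by
  classical
  have hn : (1 : ℝ) ≤ finrank ℝ E := by exact_mod_cast finrank_pos (R := ℝ) (M := E)
  by_contra! hfar
  have hne : x ≠ y := by
    rintro rfl
    rw [dist_self] at hfar
    exact hfar.not_ge (by positivity)
  have hcard := h.card_le_of_separated (τ := 36 * finrank ℝ E) (X := {x, y}) (by linarith)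
    (by simp [Set.insert_subset_iff, hx, hy]) (by
      rw [Finset.coe_pair, Set.pairwise_pair]
      exact fun _ => ⟨hfar, dist_comm x y ▸ hfar⟩)
  have hexp : exp (1 / 3) < 3 / 2 := by
    have := add_one_lt_exp (x := -(1 / 3)) (by norm_num)
    rw [exp_neg, lt_inv_comm₀ (by norm_num) (by positivity)] at this
    linarith
  rw [Finset.card_pair hne,
    show (12 * finrank ℝ E / (36 * finrank ℝ E) : ℝ) = 1 / 3 by field_simp; norm_num] at hcard
  push_cast at hcard
  linarith

end IsConcentrated

end Covering

section GaussianPolar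

variable {E : Type*} [NormedAddCommGroup E] [InnerProductSpace ℝ E]

theorem mul_self_exp_mul_exp_neg_le (x : ℝ) :
    4 / 3 * exp x * (4 / 3 * exp x) * exp (-(2 * x + 3)) ≤ 1 / 4 := by
  have hexp : exp (-3) ≤ 1 / 8 := by
    rw [exp_neg, inv_le_comm₀ (by positivity) (by norm_num),
      show (3 : ℝ) = (3 : ℕ) * 1 by norm_num, exp_nat_mul]
    calc (1 / 8 : ℝ)⁻¹ = 2 ^ 3 := by norm_num
      _ ≤ exp 1 ^ 3 := by gcongr; linarith [add_one_le_exp (1 : ℝ)]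
  calc 4 / 3 * exp x * (4 / 3 * exp x) * exp (-(2 * x + 3))
      = 16 / 9 * exp (x + x + -(2 * x + 3)) := by rw [exp_add, exp_add]; ring
    _ = 16 / 9 * exp (-3) := by ring_nf
    _ ≤ 1 / 4 := by linarith

theorem mem_smul_polar_iff {S : Set E} {x : E} {l : ℝ} (hl : 0 < l) :
    x ∈ l • (innerₗ E).polar S ↔ ∀ q ∈ S, |inner ℝ q x| ≤ l := by
  rw [Set.mem_smul_set_iff_inv_smul_mem₀ hl.ne', LinearMap.polar_mem_iff]
  refine forall₂_congr fun q _ => ?_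
  rw [innerₗ_apply_apply, inner_smul_right, norm_mul, norm_inv, norm_of_nonneg hl.le,
    inv_mul_le_one₀ hl, Real.norm_eq_abs]

variable [FiniteDimensional ℝ E] [MeasurableSpace E] [BorelSpace E] [Nontrivial E]

theorem stdGaussian_compl_smul_polar_le {Q : Set E} (hQ : -Q = Q) {R : Finset E} {r δ a l : ℝ}
    (hr : 0 ≤ r) (hRr : ∀ q ∈ R, ‖q‖ ≤ r) (hR : ∀ q ∈ Q, ∃ p ∈ R, dist q p ≤ δ)
    (ha : 0 ≤ a) (hl : 0 < l) (hal : a + 3 * √(finrank ℝ E) * δ ≤ l) :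
    stdGaussian E (l • (innerₗ E).polar Q)ᶜ ≤
      ENNReal.ofReal (R.card * exp (-(a ^ 2 / (2 * r ^ 2))) + 1 / 4) := by
  have hsub : (l • (innerₗ E).polar Q)ᶜ ⊆
      (⋃ q ∈ R, {x | a ≤ inner ℝ q x}) ∪ {x | 3 * √(finrank ℝ E) ≤ ‖x‖} := by
    intro x hx
    contrapose! hx
    simp only [Set.mem_union, Set.mem_iUnion, Set.mem_ofPred_eq, not_or, not_exists,
      not_le] at hx
    obtain ⟨hxR, hxnorm⟩ := hx
    have hle : ∀ q ∈ Q, inner ℝ q x ≤ l := by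
      intro q hq
      obtain ⟨p, hp, hqp⟩ := hR q hq
      have hδ : 0 ≤ δ := dist_nonneg.trans hqp
      calc inner ℝ q x = inner ℝ p x + inner ℝ (q - p) x := by rw [inner_sub_left]; ring
        _ ≤ a + ‖q - p‖ * ‖x‖ := add_le_add (hxR p hp).le (real_inner_le_norm _ _)
        _ ≤ a + δ * (3 * √(finrank ℝ E)) := by gcongr; rwa [← dist_eq_norm]
        _ ≤ l := by linarith
    rw [Set.notMem_compl_iff, mem_smul_polar_iff hl]
    intro q hq
    have hneg := hle (-q) (by rwa [← Set.mem_neg, hQ])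
    rw [inner_neg_left] at hneg
    exact abs_le.2 ⟨by linarith, hle q hq⟩
  calc _ ≤ stdGaussian E (⋃ q ∈ R, {x | a ≤ inner ℝ q x}) +
        stdGaussian E {x | 3 * √(finrank ℝ E) ≤ ‖x‖} :=
        (measure_mono hsub).trans (measure_union_le _ _)
    _ ≤ ∑ q ∈ R, ENNReal.ofReal (exp (-(a ^ 2 / (2 * r ^ 2)))) + ENNReal.ofReal (1 / 4) := by
        gcongr
        · refine (measure_biUnion_finset_le _ _).trans (Finset.sum_le_sum fun q hq => ?_)
          exact stdGaussian_inner_ge_le ha hr (hRr q hq)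
        · exact stdGaussian_norm_ge_le
    _ = _ := by
        rw [Finset.sum_const, nsmul_eq_mul, ENNReal.ofReal_add (by positivity) (by norm_num),
          ENNReal.ofReal_mul (by positivity), ENNReal.ofReal_natCast]

theorem IsConcentrated.half_le_stdGaussian_smul_polar {ν : Measure E} [IsProbabilityMeasure ν]
    {K : Set E} {b : E} (h : IsConcentrated ν K b) {τ r a l : ℝ} (hτ : 8 ≤ τ) (hr : 0 ≤ r)
    (ha : 0 ≤ a) (hal : a + 12 * τ * finrank ℝ E ≤ l)
    (har : 24 * finrank ℝ E / τ + 3 ≤ a ^ 2 / (2 * r ^ 2)) :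
    ENNReal.ofReal (1 / 2) ≤
      stdGaussian E (l • (innerₗ E).polar ((K - K) ∩ closedBall 0 r)) := by
  classical
  have hn : (0 : ℝ) < finrank ℝ E := by exact_mod_cast finrank_pos
  obtain ⟨X, hXcard, hX⟩ := h.exists_finset_net hτ
  set Q := (K - K) ∩ closedBall 0 r
  have hQ : -Q = Q := by rw [Set.inter_neg, neg_sub, neg_closedBall, neg_zero]
  obtain ⟨R, hRQ, hRcard, hR⟩ : ∃ R : Finset E, ↑R ⊆ Q ∧ R.card ≤ (X - X).card ∧
      ∀ q ∈ Q, ∃ p ∈ R, dist q p ≤ 2 * (2 * (τ * √(finrank ℝ E))) := by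
    refine exists_finset_subset_of_forall_dist_le ?_
    rintro _ ⟨⟨y, hy, z, hz, rfl⟩, -⟩
    obtain ⟨y', hy', hyy'⟩ := hX y hy
    obtain ⟨z', hz', hzz'⟩ := hX z hz
    exact ⟨y' - z', Finset.sub_mem_sub hy' hz', by linarith [dist_sub_sub_le y z y' z']⟩
  have hcompl := stdGaussian_compl_smul_polar_le (l := l) hQ hr
    (fun q hq => by simpa using (hRQ hq).2) hR ha
    (lt_of_lt_of_le (by positivity) hal) (by
      rw [show 3 * √(finrank ℝ E) * (2 * (2 * (τ * √(finrank ℝ E)))) =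
        12 * τ * (√(finrank ℝ E) * √(finrank ℝ E)) by ring, mul_self_sqrt hn.le]
      exact hal)
  have hsmall : R.card * exp (-(a ^ 2 / (2 * r ^ 2))) + 1 / 4 ≤ 1 / 2 := by
    have hRX : (R.card : ℝ) ≤ X.card * X.card := by
      exact_mod_cast hRcard.trans (Finset.card_sub_le)
    calc R.card * exp (-(a ^ 2 / (2 * r ^ 2))) + 1 / 4
        ≤ 4 / 3 * exp (12 * finrank ℝ E / τ) * (4 / 3 * exp (12 * finrank ℝ E / τ)) *
            exp (-(2 * (12 * finrank ℝ E / τ) + 3)) + 1 / 4 := by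
          gcongr
          · exact hRX.trans (by gcongr)
          · linarith [show 2 * (12 * finrank ℝ E / τ) = 24 * finrank ℝ E / τ by ring]
      _ ≤ 1 / 2 := by linarith [mul_self_exp_mul_exp_neg_le (12 * finrank ℝ E / τ)]
  have hmeas : MeasurableSet (l • (innerₗ E).polar Q) :=
    ((isClosed_polar Q).smul₀ l).measurableSet
  rw [prob_compl_eq_one_sub hmeas, tsub_le_iff_right] at hcompl
  refine (ENNReal.add_le_add_iff_left (a := ENNReal.ofReal (1 / 2)) ENNReal.ofReal_ne_top).1 ?_
  rw [← ENNReal.ofReal_add (by norm_num) (by norm_num), add_halves, ENNReal.ofReal_one]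
  exact hcompl.trans (by gcongr)

end GaussianPolar

section PolarVolume

variable {E : Type*} [NormedAddCommGroup E] [InnerProductSpace ℝ E] [FiniteDimensional ℝ E]
  [MeasurableSpace E] [BorelSpace E]

theorem one_le_volume_closedBall_sqrt_finrank :
    1 ≤ volume (closedBall (0 : E) √(finrank ℝ E)) := by
  set e := stdOrthonormalBasis ℝ E
  rw [← e.volume_parallelepiped]
  refine measure_mono fun x hx => ?_
  obtain ⟨t, ht, rfl⟩ := (mem_parallelepiped_iff _ _).1 hx
  rw [mem_closedBall_zero_iff]
  refine le_sqrt_of_sq_le ?_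
  calc ‖∑ i, t i • e i‖ ^ 2 = ∑ i, t i ^ 2 := by
        rw [← real_inner_self_eq_norm_sq, e.orthonormal.inner_sum]
        simp [sq]
    _ ≤ ∑ _i : Fin (finrank ℝ E), (1 : ℝ) := by
        gcongr with i
        exact pow_le_one₀ (ht.1 i) (ht.2 i)
    _ = finrank ℝ E := by simp

namespace IsConcentrated

variable [Nontrivial E] {ν : Measure E} [IsProbabilityMeasure ν] {K : Set E} {b : E}

theorem sub_inter_closedBall_eq (h : IsConcentrated ν K b) {r : ℝ}
    (hr : 36 * finrank ℝ E * √(finrank ℝ E) ≤ r) : (K - K) ∩ closedBall 0 r = K - K := by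
  refine Set.inter_eq_left.2 ?_
  rintro _ ⟨x, hx, y, hy, rfl⟩
  rw [mem_closedBall_zero_iff, ← dist_eq_norm]
  exact (h.dist_le hx hy).trans hr

-- The choice `τ = 8 p⁴`, `l = 1056 n p⁴`, `δ = 1 / p`, `ρ = 1 / (p⁶ √n)` makes the exponent
-- `ρ² l² / (2 δ²)` of the volume comparison equal to `557568 n / p²`.
theorem volume_polar_le_of_pow_lt (h : IsConcentrated ν K b) (hK : K.Nonempty) {p : ℝ}
    (hp : 1 ≤ p) (hpn : p ^ 6 < 36 * finrank ℝ E) :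
    volume ((innerₗ E).polar ((K - K) ∩ closedBall 0 (p ^ 6 * √(finrank ℝ E)))) ≤
      ENNReal.ofReal (2 * exp (finrank ℝ E * (557569 / p))) *
        volume ((innerₗ E).polar ((K - K) ∩ closedBall 0 ((2 * p) ^ 6 * √(finrank ℝ E)))) := by
  set n := (finrank ℝ E : ℝ) with hn
  have hn0 : 0 < n := Nat.cast_pos.2 finrank_pos
  have hp0 : 0 < p := by linarith
  have hp4 : 1 ≤ p ^ 4 := one_le_pow₀ hp
  have hgauss := h.half_le_stdGaussian_smul_polar (τ := 8 * p ^ 4) (r := (2 * p) ^ 6 * √n)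
    (a := 960 * n * p ^ 4) (l := 1056 * n * p ^ 4) (by linarith) (by positivity) (by positivity)
    (by rw [← hn]; linarith) (by
      have hpn4 : p ^ 4 ≤ 36 * n :=
        (pow_le_pow_right₀ hp (by norm_num)).trans hpn.le
      calc 24 * n / (8 * p ^ 4) + 3 = (3 * n + 3 * p ^ 4) / p ^ 4 := by field_simp; ring
        _ ≤ 225 / 2 * n / p ^ 4 := by gcongr; linarith
        _ = (960 * n * p ^ 4) ^ 2 / (2 * ((2 * p) ^ 6 * √n) ^ 2) := by
            rw [mul_pow ((2 * p) ^ 6), sq_sqrt hn0.le]; field_simp; norm_num)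
  have hsub := polar_sub_inter_closedBall_subset h.isCompact h.convex hK
    (r := p ^ 6 * √n) (r' := (2 * p) ^ 6 * √n)
    (by positivity) (by gcongr; linarith)
  refine (volume_le_of_subset_add_closedBall (isClosed_polar _) (convex_polar _) (neg_polar _)
    (isClosed_polar _).measurableSet (δ := p⁻¹) (by positivity) (by positivity) hsub
    hgauss).trans ?_
  gcongr ENNReal.ofReal ?_ * _
  have hpow : (1 + p⁻¹) ^ finrank ℝ E ≤ exp (n * p⁻¹) := by
    rw [exp_nat_mul]
    gcongr
    linarith [add_one_le_exp p⁻¹]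
  have hexp : (p ^ 6 * √n)⁻¹ ^ 2 * (1056 * n * p ^ 4) ^ 2 / (2 * p⁻¹ ^ 2) ≤ n * (557568 / p) := by
    rw [inv_pow, mul_pow (p ^ 6), sq_sqrt hn0.le]
    field_simp
    linarith
  calc _ ≤ 2 * exp (n * p⁻¹) * exp (n * (557568 / p)) := by gcongr
    _ = _ := by rw [mul_assoc, ← exp_add]; ring_nf

theorem volume_polar_le_volume_polar_two_mul (h : IsConcentrated ν K b) (hK : K.Nonempty) {p : ℝ}
    (hp : 1 ≤ p) :
    volume ((innerₗ E).polar ((K - K) ∩ closedBall 0 (p ^ 6 * √(finrank ℝ E)))) ≤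
      ENNReal.ofReal (2 * exp (finrank ℝ E * (557569 / p))) *
        volume ((innerₗ E).polar ((K - K) ∩ closedBall 0 ((2 * p) ^ 6 * √(finrank ℝ E)))) := by
  rcases lt_or_ge (p ^ 6) (36 * finrank ℝ E) with hpn | hpn
  · exact h.volume_polar_le_of_pow_lt hK hp hpn
  have hr : 36 * finrank ℝ E * √(finrank ℝ E) ≤ p ^ 6 * √(finrank ℝ E) := by gcongr
  rw [h.sub_inter_closedBall_eq hr, h.sub_inter_closedBall_eq (hr.trans (by gcongr; linarith))]
  refine le_mul_of_one_le_left zero_le (ENNReal.one_le_ofReal.2 ?_)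
  linarith [one_le_exp (x := finrank ℝ E * (557569 / p)) (by positivity)]

theorem volume_polar_le_volume_polar_two_pow (h : IsConcentrated ν K b) (hK : K.Nonempty)
    (k : ℕ) :
    volume ((innerₗ E).polar ((K - K) ∩ closedBall 0 √(finrank ℝ E))) ≤
      ENNReal.ofReal (2 ^ k * exp (finrank ℝ E * (1115138 * (1 - 1 / 2 ^ k)))) *
        volume ((innerₗ E).polar ((K - K) ∩ closedBall 0 ((2 ^ k) ^ 6 * √(finrank ℝ E)))) := by
  induction k with
  | zero => simp
  | succ k ih =>
    refine ih.trans <| (mul_le_mul_right (h.volume_polar_le_volume_polar_two_mul hK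
      (one_le_pow₀ one_le_two : (1 : ℝ) ≤ 2 ^ k)) _).trans_eq ?_
    rw [← mul_assoc, ← ENNReal.ofReal_mul (by positivity), mul_mul_mul_comm, ← exp_add,
      ← pow_succ, ← pow_succ']
    congr 4
    field_simp
    ring

/-- A constant `c` such that `n` times the polar of the difference body of a concentrated body has
volume at least `c ^ n`. -/
noncomputable def polarConst : ℝ := exp (-1115138) / 2

theorem polarConst_pos : 0 < polarConst := by
  unfold polarConst
  positivity

theorem one_le_volume_smul_polar_closedBall :
    1 ≤ volume ((finrank ℝ E : ℝ) • (innerₗ E).polar (closedBall 0 √(finrank ℝ E))) := by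
  refine one_le_volume_closedBall_sqrt_finrank.trans (measure_mono fun η hη => ?_)
  rw [mem_smul_polar_iff (Nat.cast_pos.2 finrank_pos)]
  intro q hq
  rw [mem_closedBall_zero_iff] at hη hq
  calc |inner ℝ q η| ≤ ‖q‖ * ‖η‖ := abs_real_inner_le_norm q η
    _ ≤ √(finrank ℝ E) * √(finrank ℝ E) := by gcongr
    _ = finrank ℝ E := mul_self_sqrt (Nat.cast_nonneg _)

theorem polarConst_pow_le_volume_smul_polar (h : IsConcentrated ν K b) (hK : K.Nonempty) :
    ENNReal.ofReal (polarConst ^ finrank ℝ E) ≤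
      volume ((finrank ℝ E : ℝ) • (innerₗ E).polar (K - K)) := by
  set n := finrank ℝ E
  set P := (innerₗ E).polar (K - K)
  have hball : volume ((innerₗ E).polar (closedBall 0 √n)) ≤
      ENNReal.ofReal (2 ^ n * exp (n * 1115138)) * volume P := by
    have hfull := h.sub_inter_closedBall_eq (r := (2 ^ n) ^ 6 * √n) (by
      gcongr ?_ * _
      have hbernoulli : (1 : ℝ) + n * 63 ≤ (1 + 63) ^ n := one_add_mul_le_pow (by norm_num) n
      calc 36 * (n : ℝ) ≤ (1 + 63) ^ n := by linarith
        _ = (2 ^ n) ^ 6 := by rw [← pow_mul, mul_comm, pow_mul]; norm_num)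
    have hscales := h.volume_polar_le_volume_polar_two_pow hK n
    rw [hfull] at hscales
    refine (measure_mono ((innerₗ E).polar_antitone Set.inter_subset_right)).trans
      (hscales.trans ?_)
    gcongr
    linarith [show (0 : ℝ) ≤ 1 / 2 ^ n by positivity]
  have hone : 1 ≤ ENNReal.ofReal (2 ^ n * exp (n * 1115138)) * volume ((n : ℝ) • P) := by
    refine (one_le_volume_smul_polar_closedBall (E := E)).trans ?_
    rw [Measure.addHaar_smul, Measure.addHaar_smul, mul_left_comm]
    gcongr
  have hconst : polarConst ^ n * (2 ^ n * exp (n * 1115138)) = 1 := by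
    rw [polarConst, exp_nat_mul, ← mul_pow, ← mul_pow, exp_neg]
    field_simp
    simp
  calc ENNReal.ofReal (polarConst ^ n)
      ≤ ENNReal.ofReal (polarConst ^ n) *
          (ENNReal.ofReal (2 ^ n * exp (n * 1115138)) * volume ((n : ℝ) • P)) :=
        le_mul_of_one_le_right' hone
    _ = volume ((n : ℝ) • P) := by
        rw [← mul_assoc, ← ENNReal.ofReal_mul (by positivity [polarConst_pos]), hconst,
          ENNReal.ofReal_one, one_mul]

end IsConcentrated

end PolarVolume

section ExponentialTilt

open InnerProductSpace

variable {E : Type*} [NormedAddCommGroup E] [InnerProductSpace ℝ E] [MeasurableSpace E]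

/-- The exponential tilt of `μ` in direction `ξ`, whose density with respect to `μ` is proportional
to `exp ⟪ξ, y⟫`. -/
noncomputable abbrev expTilt (μ : Measure E) (ξ : E) : Measure E :=
  μ.tilted (inner ℝ ξ ·)

theorem integral_expTilt {F : Type*} [NormedAddCommGroup F] [NormedSpace ℝ F] (μ : Measure E)
    (φ : E → F) (ξ : E) :
    ∫ y, φ y ∂expTilt μ ξ =
      (∫ y, exp (inner ℝ ξ y) ∂μ)⁻¹ • ∫ y, exp (inner ℝ ξ y) • φ y ∂μ := by
  rw [integral_tilted, ← integral_smul]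
  simp only [div_eq_inv_mul, mul_smul]

theorem expTilt_ae_norm_le {μ : Measure E} {R : ℝ} (hμ : ∀ᵐ y ∂μ, ‖y‖ ≤ R) (ξ : E) :
    ∀ᵐ y ∂expTilt μ ξ, ‖y‖ ≤ R :=
  (tilted_absolutelyContinuous μ _).ae_le hμ

variable [FiniteDimensional ℝ E] [BorelSpace E]

/-- The operator representing the (centred) covariance bilinear form of `ν`. -/
noncomputable def covarianceMap (ν : Measure E) : E →L[ℝ] E :=
  have := FiniteDimensional.complete ℝ E
  continuousLinearMapOfBilin (covarianceBilin ν)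

theorem inner_covarianceMap (ν : Measure E) (v w : E) :
    inner ℝ (covarianceMap ν v) w = covarianceBilin ν v w :=
  have := FiniteDimensional.complete ℝ E
  continuousLinearMapOfBilin_apply _ v w

variable {μ : Measure E} [IsFiniteMeasure μ] {R : ℝ}

section Integrals

variable {F : Type*} [NormedAddCommGroup F] {φ : E → F}

theorem integrable_of_continuous_of_ae_norm_le (hμ : ∀ᵐ y ∂μ, ‖y‖ ≤ R) (hφ : Continuous φ) :
    Integrable φ μ := by
  have hball : μ.restrict (closedBall 0 R) = μ :=
    Measure.restrict_eq_self_of_ae_mem (by simpa using hμ)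
  rw [← hball]
  exact hφ.continuousOn.integrableOn_compact (isCompact_closedBall 0 R)

theorem memLp_id_of_ae_norm_le (hμ : ∀ᵐ y ∂μ, ‖y‖ ≤ R) : MemLp id 2 μ :=
  (memLp_two_iff_integrable_sq_norm (by fun_prop)).2
    (integrable_of_continuous_of_ae_norm_le hμ (by fun_prop))

theorem isProbabilityMeasure_expTilt [NeZero μ] (hμ : ∀ᵐ y ∂μ, ‖y‖ ≤ R) (ξ : E) :
    IsProbabilityMeasure (expTilt μ ξ) :=
  isProbabilityMeasure_tilted (integrable_of_continuous_of_ae_norm_le hμ (by fun_prop))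

variable [NormedSpace ℝ F]

theorem integrable_exp_inner_smul (hμ : ∀ᵐ y ∂μ, ‖y‖ ≤ R) (hφ : Continuous φ) (ξ : E) :
    Integrable (fun y => exp (inner ℝ ξ y) • φ y) μ :=
  integrable_of_continuous_of_ae_norm_le hμ (by fun_prop)

theorem hasFDerivAt_integral_exp_inner_smul (hμ : ∀ᵐ y ∂μ, ‖y‖ ≤ R) (hφ : Continuous φ) (ξ : E) :
    HasFDerivAt (fun ξ => ∫ y, exp (inner ℝ ξ y) • φ y ∂μ)
      (∫ y, exp (inner ℝ ξ y) • (innerSL ℝ y).smulRight (φ y) ∂μ) ξ := by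
  have hφ' : Continuous fun y => (innerSL ℝ y).smulRight (φ y) := by fun_prop
  refine hasFDerivAt_integral_of_dominated_of_fderiv_le (s := ball ξ 1)
    (F' := fun ξ y => exp (inner ℝ ξ y) • (innerSL ℝ y).smulRight (φ y))
    (bound := fun y => exp ((‖ξ‖ + 1) * ‖y‖) * (‖y‖ * ‖φ y‖)) (ball_mem_nhds ξ one_pos)
    (.of_forall fun x => (integrable_exp_inner_smul hμ hφ x).aestronglyMeasurable)
    (integrable_exp_inner_smul hμ hφ ξ)
    (integrable_exp_inner_smul hμ hφ' ξ).aestronglyMeasurable (.of_forall fun y x hx => ?_)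
    (integrable_of_continuous_of_ae_norm_le hμ (by fun_prop)) (.of_forall fun y x _ => ?_)
  · have hxξ : ‖x‖ ≤ ‖ξ‖ + 1 := by
      linarith [norm_le_norm_add_norm_sub' x ξ, mem_ball_iff_norm.1 hx]
    rw [norm_smul, Real.norm_eq_abs, Real.abs_exp, ContinuousLinearMap.norm_smulRight_apply,
      innerSL_apply_norm]
    gcongr
    exact (real_inner_le_norm x y).trans (by gcongr)
  · have hinner : HasFDerivAt (fun x : E => inner ℝ x y) (innerSL ℝ y) x := by
      simp only [real_inner_comm y]
      exact (innerSL ℝ y).hasFDerivAt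
    refine (hinner.exp.smul_const (φ y)).congr_fderiv ?_
    ext v
    simp [mul_smul]

theorem hasFDerivAt_integral_expTilt [NeZero μ] (hμ : ∀ᵐ y ∂μ, ‖y‖ ≤ R) (hφ : Continuous φ)
    (ξ : E) :
    HasFDerivAt (fun ξ => ∫ y, φ y ∂expTilt μ ξ)
      (∫ y, (innerSL ℝ y).smulRight (φ y) ∂expTilt μ ξ -
        (∫ y, innerSL ℝ y ∂expTilt μ ξ).smulRight (∫ y, φ y ∂expTilt μ ξ)) ξ := by
  have hZ : (∫ y, exp (inner ℝ ξ y) ∂μ) ≠ 0 :=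
    (integral_exp_pos (integrable_of_continuous_of_ae_norm_le hμ (by fun_prop))).ne'
  have hdZ : HasFDerivAt (fun ξ => ∫ y, exp (inner ℝ ξ y) ∂μ)
      (∫ y, exp (inner ℝ ξ y) • innerSL ℝ y ∂μ) ξ := by
    have hone (y : E) : (innerSL ℝ y).smulRight (1 : ℝ) = innerSL ℝ y := by ext; simp
    simpa only [smul_eq_mul, mul_one, hone] using
      hasFDerivAt_integral_exp_inner_smul hμ (continuous_const (y := (1 : ℝ))) ξ
  simp only [integral_expTilt]
  refine (((hasDerivAt_inv hZ).comp_hasFDerivAt ξ hdZ).smul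
    (hasFDerivAt_integral_exp_inner_smul hμ hφ ξ)).congr_fderiv ?_
  ext v
  simp only [Function.comp_apply, add_apply, sub_apply, smul_apply,
    ContinuousLinearMap.smulRight_apply, smul_eq_mul]
  module

end Integrals

variable [NeZero μ]

theorem hasFDerivAt_integral_id_expTilt (hμ : ∀ᵐ y ∂μ, ‖y‖ ≤ R) (ξ : E) :
    HasFDerivAt (fun ξ => ∫ y, y ∂expTilt μ ξ) (covarianceMap (expTilt μ ξ)) ξ := by
  have := FiniteDimensional.complete ℝ E
  have := isProbabilityMeasure_expTilt hμ ξ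
  have hν := expTilt_ae_norm_le hμ ξ
  refine (hasFDerivAt_integral_expTilt hμ continuous_id ξ).congr_fderiv ?_
  have hLp {φ : E → ℝ} (hφ : Continuous φ) : MemLp φ 2 (expTilt μ ξ) :=
    (memLp_two_iff_integrable_sq hφ.aestronglyMeasurable).2
      (integrable_of_continuous_of_ae_norm_le hν (by fun_prop))
  have hLpid : MemLp id 2 (expTilt μ ξ) := memLp_id_of_ae_norm_le hν
  ext v
  refine ext_inner_right ℝ fun w => ?_
  rw [inner_covarianceMap, covarianceBilin_apply_eq_cov hLpid,
    covariance_eq_sub (hLp (by fun_prop)) (hLp (by fun_prop))]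
  have hint {G : Type _} [NormedAddCommGroup G] {ψ : E → G} (hψ : Continuous ψ) :
      Integrable ψ (expTilt μ ξ) := integrable_of_continuous_of_ae_norm_le hν hψ
  rw [sub_apply, ContinuousLinearMap.smulRight_apply,
    ContinuousLinearMap.integral_apply (hint (by fun_prop)),
    ContinuousLinearMap.integral_apply (hint (by fun_prop)), inner_sub_left, inner_smul_left]
  simp only [real_inner_comm w]
  rw [← integral_inner (hint (by fun_prop)), ← integral_inner (hint (by fun_prop))]
  simp [real_inner_comm, inner_smul_right]

end ExponentialTilt

section BarycentreMap

theorem injective_of_inner_fderiv_pos {E : Type*} [NormedAddCommGroup E] [InnerProductSpace ℝ E]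
    {g : E → E} {g' : E → E →L[ℝ] E} (hg : ∀ x, HasFDerivAt g (g' x) x)
    (hpos : ∀ x v, v ≠ 0 → 0 < inner ℝ (g' x v) v) : Function.Injective g := by
  intro x y hxy
  by_contra hne
  set v := y - x
  have hmono : StrictMono fun t : ℝ => inner ℝ (g (x + t • v)) v := by
    refine strictMono_of_hasDerivAt_pos (f' := fun t => inner ℝ (g' (x + t • v) v) v)
      (fun t => ?_) fun t => hpos _ v (sub_ne_zero.2 (Ne.symm hne))
    have hline : HasDerivAt (fun t : ℝ => x + t • v) v t := by
      simpa using ((hasDerivAt_id t).smul_const v).const_add x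
    simpa using ((hg _).comp_hasDerivAt t hline).inner ℝ (hasDerivAt_const t v)
  simpa [v, hxy] using hmono zero_lt_one

variable {E : Type*} [NormedAddCommGroup E] [InnerProductSpace ℝ E] [FiniteDimensional ℝ E]
  [MeasurableSpace E] [BorelSpace E]

theorem covarianceBilin_self_pos {ν : Measure E} [IsProbabilityMeasure ν] (hν : MemLp id 2 ν)
    (hac : ν ≪ volume) {v : E} (hv : v ≠ 0) : 0 < covarianceBilin ν v v := by
  have := FiniteDimensional.complete ℝ E
  refine lt_of_le_of_ne (covarianceBilin_self_nonneg v) fun hzero => ?_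
  rw [covarianceBilin_self hν] at hzero
  have hconst := ae_eq_integral_of_variance_eq_zero (hν.const_inner v) hzero.symm
  set c := ∫ x, inner ℝ v x ∂ν
  have hplane : {y : E | inner ℝ v y = c} =
      (· + -((c / ‖v‖ ^ 2) • v)) ⁻¹' ((innerₗ E v).ker : Set E) := by
    ext y
    simp [inner_add_right, inner_smul_right, hv, add_neg_eq_zero]
  have hker : (innerₗ E v).ker ≠ ⊤ := by
    simpa [LinearMap.ker_eq_top] using fun h => hv (by simpa using LinearMap.congr_fun h v)
  have hnull : ν {y | inner ℝ v y = c} = 0 := hac <| by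
    rw [hplane, measure_preimage_add_right, Measure.addHaar_submodule _ _ hker]
  obtain ⟨y, hy, hyc⟩ := (hconst.and (measure_eq_zero_iff_ae_notMem.1 hnull)).exists
  exact hyc hy

theorem injective_integral_id_expTilt {μ : Measure E} [IsFiniteMeasure μ] [NeZero μ] {R : ℝ}
    (hμ : ∀ᵐ y ∂μ, ‖y‖ ≤ R) (hac : μ ≪ volume) :
    Function.Injective fun ξ => ∫ y, y ∂expTilt μ ξ := by
  refine injective_of_inner_fderiv_pos (hasFDerivAt_integral_id_expTilt hμ) fun ξ v hv => ?_
  have := isProbabilityMeasure_expTilt hμ ξ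
  rw [inner_covarianceMap]
  have hLp : MemLp id 2 (expTilt μ ξ) :=
    memLp_id_of_ae_norm_le (expTilt_ae_norm_le hμ ξ)
  exact covarianceBilin_self_pos hLp ((tilted_absolutelyContinuous μ _).trans hac) hv

theorem integral_id_expTilt_mem {μ : Measure E} [IsFiniteMeasure μ] [NeZero μ] {K : Set E}
    (hK : IsCompact K) (hconv : Convex ℝ K) (hμ : ∀ᵐ y ∂μ, y ∈ K) (ξ : E) :
    ∫ y, y ∂expTilt μ ξ ∈ K := by
  obtain ⟨R, hR⟩ := hK.isBounded.exists_norm_le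
  have hμR : ∀ᵐ y ∂μ, ‖y‖ ≤ R := hμ.mono hR
  have := isProbabilityMeasure_expTilt hμR ξ
  exact hconv.integral_mem hK.isClosed ((tilted_absolutelyContinuous μ _).ae_le hμ)
    (integrable_of_continuous_of_ae_norm_le (expTilt_ae_norm_le hμR ξ) continuous_id)

theorem exists_det_covarianceMap_expTilt_mul_volume_le {μ : Measure E} [IsFiniteMeasure μ]
    [NeZero μ] (hac : μ ≪ volume) {K : Set E} (hK : IsCompact K) (hconv : Convex ℝ K)
    (hμ : ∀ᵐ y ∂μ, y ∈ K) {N : Set E} (hN : MeasurableSet N) (hne : N.Nonempty)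
    (hfin : volume N ≠ ⊤) :
    ∃ ξ ∈ N, ENNReal.ofReal |(covarianceMap (expTilt μ ξ)).det| * volume N ≤ volume K := by
  obtain ⟨R, hR⟩ := hK.isBounded.exists_norm_le
  have hμR : ∀ᵐ y ∂μ, ‖y‖ ≤ R := hμ.mono hR
  rcases eq_or_ne (volume N) 0 with h0 | h0
  · obtain ⟨ξ, hξ⟩ := hne
    exact ⟨ξ, hξ, by simp [h0]⟩
  have hderiv (ξ : E) (_ : ξ ∈ N) :=
    (hasFDerivAt_integral_id_expTilt hμR ξ).hasFDerivWithinAt (s := N)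
  have harea := lintegral_abs_det_fderiv_eq_addHaar_image volume hN hderiv
    (injective_integral_id_expTilt hμR hac).injOn
  obtain ⟨ξ, hξ, hle⟩ := exists_le_setLAverage h0 hfin
    (aemeasurable_ofReal_abs_det_fderivWithin volume hN hderiv)
  rw [setLAverage_eq, harea, ENNReal.le_div_iff_mul_le (.inl h0) (.inl hfin)] at hle
  refine ⟨ξ, hξ, hle.trans (measure_mono ?_)⟩
  rintro _ ⟨ξ', -, rfl⟩
  exact integral_id_expTilt_mem hK hconv hμ ξ'

end BarycentreMap

section PolarDifferenceBody

variable {E : Type*} [NormedAddCommGroup E] [InnerProductSpace ℝ E]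

theorem isBounded_polar_sub {K : Set E} (hK : (interior K).Nonempty) :
    Bornology.IsBounded ((innerₗ E).polar (K - K)) := by
  obtain ⟨x, hx⟩ := hK
  obtain ⟨ε, hε, hball⟩ := nhds_basis_closedBall.mem_iff.1 (mem_interior_iff_mem_nhds.1 hx)
  refine isBounded_closedBall.subset (((innerₗ E).polar_antitone fun y hy => ?_).trans
    (polar_closedBall_subset hε))
  exact ⟨x + y, hball (by simpa using hy), x, hball (mem_closedBall_self hε.le), by simp⟩

variable [FiniteDimensional ℝ E] [MeasurableSpace E] [BorelSpace E]

theorem interior_nonempty_of_volume_ne_zero {K : Set E} (hK : Convex ℝ K) (hvol : volume K ≠ 0) :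
    (interior K).Nonempty := by
  rw [Set.nonempty_iff_ne_empty]
  intro hempty
  have hfrontier := hK.addHaar_frontier volume
  rw [frontier, hempty, Set.sdiff_empty] at hfrontier
  exact hvol (measure_mono_null subset_closure hfrontier)

theorem exists_mem_smul_polar_det_covarianceMap_mul_volume_le {K : Set E} (hK : IsCompact K)
    (hconv : Convex ℝ K) (hvol : volume K ≠ 0) (l : ℝ) :
    ∃ ξ ∈ l • (innerₗ E).polar (K - K),
      ENNReal.ofReal |(covarianceMap (expTilt (volume.restrict K) ξ)).det| *
        volume (l • (innerₗ E).polar (K - K)) ≤ volume K := by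
  have : IsFiniteMeasure (volume.restrict K) := ⟨by simpa using hK.measure_lt_top⟩
  have : NeZero (volume.restrict K) := ⟨by simpa using hvol⟩
  have hcompact : IsCompact (l • (innerₗ E).polar (K - K)) :=
    (Metric.isCompact_of_isClosed_isBounded (isClosed_polar _)
      (isBounded_polar_sub (interior_nonempty_of_volume_ne_zero hconv hvol))).smul l
  exact exists_det_covarianceMap_expTilt_mul_volume_le Measure.absolutelyContinuous_restrict hK
    hconv (ae_restrict_mem hK.measurableSet) hcompact.measurableSet
    ⟨0, 0, (innerₗ E).zero_mem_polar _, by simp⟩ hcompact.measure_lt_top.ne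

end PolarDifferenceBody

section IsotropicPosition

open ContinuousLinearMap

variable {E : Type*} [NormedAddCommGroup E] [InnerProductSpace ℝ E] [FiniteDimensional ℝ E]
  [CompleteSpace E]

theorem det_adjoint (T : E →L[ℝ] E) : (adjoint T).det = T.det := by
  set u := stdOrthonormalBasis ℝ E
  change (adjoint T : E →ₗ[ℝ] E).det = (T : E →ₗ[ℝ] E).det
  rw [← LinearMap.det_toMatrix u.toBasis (T : E →ₗ[ℝ] E), ← Matrix.det_transpose,
    ← Matrix.conjTranspose_eq_transpose_of_trivial, ← LinearMap.toMatrix_adjoint,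
    LinearMap.det_toMatrix]
  rfl

theorem exists_adjoint_comp_comp_eq_id {A : E →L[ℝ] E} (hA : (A : E →ₗ[ℝ] E).IsSymmetric)
    (hpos : ∀ v, v ≠ 0 → 0 < inner ℝ (A v) v) :
    ∃ T : E →L[ℝ] E, adjoint T ∘L A ∘L T = .id ℝ E := by
  set u := hA.eigenvectorBasis rfl
  set lam := hA.eigenvalues rfl
  have hAu (i) : A (u i) = lam i • u i := hA.apply_eigenvectorBasis rfl i
  have hlam (i) : 0 < lam i := by
    have h := hpos (u i) (u.orthonormal.ne_zero i)
    rwa [hAu, inner_smul_left, real_inner_self_eq_norm_sq, u.norm_eq_one, one_pow, mul_one] at h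
  set T := (u.toBasis.constr ℝ fun i => (√(lam i))⁻¹ • u i).toContinuousLinearMap
  have hT (i) : T (u i) = (√(lam i))⁻¹ • u i := by
    rw [← u.coe_toBasis, LinearMap.coe_toContinuousLinearMap', u.toBasis.constr_basis,
      u.coe_toBasis]
  refine ⟨T, coe_injective <| u.toBasis.ext fun i =>
    InnerProductSpace.ext_inner_right_basis u.toBasis fun j => ?_⟩
  simp only [OrthonormalBasis.coe_toBasis, coe_coe, comp_apply, adjoint_inner_left, hT, map_smul,
    hAu, inner_smul_left, inner_smul_right, id_apply]
  rcases eq_or_ne i j with rfl | hij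
  · have := (sqrt_pos.2 (hlam i)).ne'
    simp only [conj_trivial, real_inner_self_eq_norm_sq, u.norm_eq_one]
    field_simp
    exact (sq_sqrt (hlam i).le).symm
  · simp [u.orthonormal.2 hij]

variable [MeasurableSpace E] [BorelSpace E] {ν : Measure E} [IsProbabilityMeasure ν]

theorem covarianceMap_map (hν : MemLp id 2 ν) (T : E →L[ℝ] E) :
    covarianceMap (ν.map T) = T ∘L covarianceMap ν ∘L adjoint T := by
  ext v
  refine ext_inner_right ℝ fun w => ?_
  rw [inner_covarianceMap, covarianceBilin_map hν, comp_apply, comp_apply, ← adjoint_inner_right,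
    inner_covarianceMap]

theorem exists_covarianceMap_map_eq_id (hν : MemLp id 2 ν)
    (hpos : ∀ v, v ≠ 0 → 0 < covarianceBilin ν v v) :
    ∃ T : E ≃L[ℝ] E, covarianceMap (ν.map T) = .id ℝ E ∧
      (T : E →L[ℝ] E).det ^ 2 * (covarianceMap ν).det = 1 := by
  have hsymm : (covarianceMap ν : E →ₗ[ℝ] E).IsSymmetric := fun v w => by
    simp only [coe_coe, inner_covarianceMap, real_inner_comm _ v, covarianceBilin_comm v w]
  obtain ⟨T, hT⟩ := exists_adjoint_comp_comp_eq_id hsymm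
    (by simpa only [inner_covarianceMap] using hpos)
  have hdet := congrArg ContinuousLinearMap.det hT
  have hmul (B C : E →L[ℝ] E) : (B ∘L C).det = B.det * C.det := LinearMap.det_comp _ _
  have hone : (ContinuousLinearMap.id ℝ E).det = 1 := LinearMap.det_id
  rw [hmul, hmul, hone] at hdet
  refine ⟨(adjoint T).toContinuousLinearEquivOfDetNeZero (left_ne_zero_of_mul_eq_one hdet), ?_, ?_⟩
  · have h := covarianceMap_map hν (adjoint T)
    rwa [adjoint_adjoint, hT] at h
  · rw [coe_toContinuousLinearEquivOfDetNeZero, ← hdet, det_adjoint]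
    ring

theorem integral_sq_norm_sub_integral_of_covarianceMap_eq_id (hν : MemLp id 2 ν)
    (hid : covarianceMap ν = .id ℝ E) :
    ∫ y, ‖y - ∫ x, x ∂ν‖ ^ 2 ∂ν = finrank ℝ E := by
  set m := ∫ x, x ∂ν
  set u := stdOrthonormalBasis ℝ E
  have hm (i) : ∫ x, inner ℝ (u i) x ∂ν = inner ℝ (u i) m :=
    integral_inner (hν.integrable one_le_two) (u i)
  have hone (i) : ∫ y, inner ℝ (u i) (y - m) ^ 2 ∂ν = 1 := by
    have hcov := covarianceBilin_self hν (u i)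
    rw [← inner_covarianceMap, hid, variance_eq_integral (by fun_prop), hm] at hcov
    simpa [inner_sub_right] using hcov.symm
  simp only [← u.sum_sq_inner_right]
  rw [integral_finsetSum]
  · simp [hone]
  · exact fun i _ => ((hν.sub (memLp_const m)).const_inner (u i)).integrable_sq

theorem le_measure_closedBall_of_covarianceMap_eq_id [Nontrivial E] (hν : MemLp id 2 ν)
    (hid : covarianceMap ν = .id ℝ E) :
    ENNReal.ofReal (3 / 4) ≤ ν (closedBall (∫ x, x ∂ν) (2 * √(finrank ℝ E))) := by
  set m := ∫ x, x ∂ν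
  set n := (finrank ℝ E : ℝ)
  have hn : 0 < n := Nat.cast_pos.2 finrank_pos
  have hint : Integrable (fun y => ‖y - m‖ ^ 2) ν :=
    (memLp_two_iff_integrable_sq_norm (by fun_prop)).1 (hν.sub (memLp_const m))
  have hmarkov := mul_meas_ge_le_integral_of_nonneg (μ := ν)
    (.of_forall fun y => sq_nonneg ‖y - m‖) hint (4 * n)
  rw [integral_sq_norm_sub_integral_of_covarianceMap_eq_id hν hid] at hmarkov
  have htail : ν.real {y | 4 * n ≤ ‖y - m‖ ^ 2} ≤ 1 / 4 := by nlinarith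
  have hcompl : (closedBall m (2 * √n))ᶜ ⊆ {y | 4 * n ≤ ‖y - m‖ ^ 2} := fun y hy => by
    rw [Set.mem_compl_iff, mem_closedBall_iff_norm, not_le] at hy
    calc 4 * n = (2 * √n) ^ 2 := by rw [mul_pow, sq_sqrt hn.le]; norm_num
      _ ≤ ‖y - m‖ ^ 2 := by gcongr
  rw [← ofReal_measureReal]
  refine ENNReal.ofReal_le_ofReal ?_
  have hball : MeasurableSet (closedBall m (2 * √n)) := isClosed_closedBall.measurableSet
  linarith [probReal_compl_eq_one_sub (μ := ν) hball, measureReal_mono (μ := ν) hcompl]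

end IsotropicPosition

section TiltedBody

theorem exp_neg_two_mul_mul_le_one_sub_pow {s : ℝ} (hs0 : 0 ≤ s) (hs1 : s ≤ 1 / 2) (n : ℕ) :
    exp (-(2 * s * n)) ≤ (1 - s) ^ n := by
  have hone : exp (-(2 * s)) ≤ 1 - s := by
    rw [exp_neg, inv_le_comm₀ (exp_pos _) (by linarith), inv_le_iff_one_le_mul₀ (by linarith)]
    nlinarith [add_one_le_exp (2 * s)]
  calc exp (-(2 * s * n)) = exp (-(2 * s)) ^ n := by rw [← exp_nat_mul]; ring_nf
    _ ≤ (1 - s) ^ n := by gcongr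

variable {E : Type*} [NormedAddCommGroup E] [InnerProductSpace ℝ E]

theorem hasFDerivAt_homothety (x a : E) (r : ℝ) :
    HasFDerivAt (AffineMap.homothety x r) (r • ContinuousLinearMap.id ℝ E) a := by
  have h := (((hasFDerivAt_id (𝕜 := ℝ) a).sub_const x).const_smul r).add_const x
  exact h.congr_of_eventuallyEq (.of_forall fun y => by simp [AffineMap.homothety_apply])

variable [MeasurableSpace E] [BorelSpace E]

theorem HasContractionBound.map {ν : Measure E} {K : Set E} (h : HasContractionBound ν K)
    (T : E ≃L[ℝ] E) : HasContractionBound (ν.map T) (T '' K) := by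
  rintro _ ⟨x, hx, rfl⟩ s hs0 hs1 A hA hAmeas
  have hT : MeasurableEmbedding T := T.toHomeomorph.measurableEmbedding
  have hpre : T ⁻¹' (AffineMap.homothety (T x) (1 - s) '' A) =
      AffineMap.homothety x (1 - s) '' (T ⁻¹' A) := by
    ext y
    constructor
    · rintro ⟨a, ha, hay⟩
      refine ⟨T.symm a, by simpa using ha, T.injective ?_⟩
      simpa [AffineMap.homothety_apply] using hay
    · rintro ⟨a, ha, rfl⟩
      exact ⟨T a, ha, by simp [AffineMap.homothety_apply]⟩
  rw [hT.map_apply, hT.map_apply, hpre]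
  refine h x hx s hs0 hs1 _ (fun a ha => ?_) (hT.measurable hAmeas)
  simpa using hA ha

variable [FiniteDimensional ℝ E] {K : Set E} {ξ : E}

theorem expTilt_restrict_apply {A : Set E} (hA : MeasurableSet A) (hAK : A ⊆ K) :
    expTilt (volume.restrict K) ξ A =
      ∫⁻ y in A, ENNReal.ofReal (exp (inner ℝ ξ y) / ∫ x in K, exp (inner ℝ ξ x)) := by
  rw [tilted_apply' _ _ hA, Measure.restrict_restrict_of_subset hAK]

theorem hasContractionBound_expTilt (hK : Convex ℝ K)
    (hξ : ∀ x ∈ K, ∀ y ∈ K, inner ℝ ξ (x - y) ≤ finrank ℝ E) :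
    HasContractionBound (expTilt (volume.restrict K) ξ) K := by
  intro x hx s hs0 hs1 A hAK hA
  set n := finrank ℝ E
  have hs : 0 ≤ 1 - s := by linarith
  set φ := AffineMap.homothety x (1 - s)
  have hφ (a : E) : φ a = a - s • (a - x) := by
    simp only [φ, AffineMap.homothety_apply, vsub_eq_sub, vadd_eq_add]
    module
  have hinj : Function.Injective φ :=
    (AffineEquiv.homothetyUnitsMulHom x (Units.mk0 (1 - s) (by linarith))).injective
  have hdet : ((1 - s) • ContinuousLinearMap.id ℝ E).det = (1 - s) ^ n := by
    rw [ContinuousLinearMap.det]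
    simp [n]
  have hφA : MeasurableSet (φ '' A) := hA.image_of_continuousOn_injOn
    (AffineMap.homothety_continuous x (1 - s)).continuousOn hinj.injOn
  have hφK : φ '' A ⊆ K := by
    rintro _ ⟨a, ha, rfl⟩
    exact AffineMap.homothety_eq_lineMap x (1 - s) a ▸
      hK.lineMap_mem hx (hAK ha) ⟨hs, sub_le_self 1 hs0⟩
  rw [expTilt_restrict_apply hA hAK, expTilt_restrict_apply hφA hφK,
    lintegral_image_eq_lintegral_abs_det_fderiv_mul volume hA
      (fun a _ => (hasFDerivAt_homothety x a (1 - s)).hasFDerivWithinAt) hinj.injOn,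
    ← lintegral_const_mul' _ _ ENNReal.ofReal_ne_top]
  refine setLIntegral_mono' hA fun a ha => ?_
  rw [hdet, ← ENNReal.ofReal_mul (exp_nonneg _), ← ENNReal.ofReal_mul (abs_nonneg _),
    abs_of_nonneg (pow_nonneg hs n), mul_div_assoc', mul_div_assoc']
  have hosc : inner ℝ ξ a - s * n ≤ inner ℝ ξ (φ a) := by
    rw [hφ, inner_sub_right, inner_smul_right]
    gcongr
    exact hξ a (hAK ha) x hx
  refine ENNReal.ofReal_le_ofReal
    (div_le_div_of_nonneg_right ?_ (integral_nonneg fun _ => (exp_pos _).le))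
  calc exp (-(3 * s * n)) * exp (inner ℝ ξ a)
      = exp (-(2 * s * n)) * exp (inner ℝ ξ a - s * n) := by
        rw [← exp_add, ← exp_add]
        ring_nf
    _ ≤ (1 - s) ^ n * exp (inner ℝ ξ (φ a)) :=
        mul_le_mul (exp_neg_two_mul_mul_le_one_sub_pow hs0 hs1 n) (exp_le_exp.2 hosc)
          (exp_pos _).le (pow_nonneg hs n)

theorem expTilt_restrict_mul_volume_le (hK : IsCompact K) {r : ℝ}
    (hξ : ∀ x ∈ K, ∀ y ∈ K, inner ℝ ξ (x - y) ≤ r) {A : Set E} (hA : MeasurableSet A)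
    (hAK : A ⊆ K) :
    expTilt (volume.restrict K) ξ A * volume K ≤ ENNReal.ofReal (exp r) * volume A := by
  have hint : IntegrableOn (fun y => exp (inner ℝ ξ y)) K :=
    Continuous.continuousOn (by fun_prop) |>.integrableOn_compact hK
  set Z := ∫ x in K, exp (inner ℝ ξ x)
  have hdens (y : E) (hy : y ∈ K) : exp (inner ℝ ξ y) / Z * volume.real K ≤ exp r := by
    have hZ : exp (inner ℝ ξ y - r) * volume.real K ≤ Z := by
      rw [mul_comm, ← smul_eq_mul, ← setIntegral_const]
      refine setIntegral_mono_on (integrableOn_const hK.measure_ne_top) hint hK.measurableSet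
        fun x hx => ?_
      have := hξ y hy x hx
      rw [inner_sub_right] at this
      gcongr
      linarith
    rw [exp_sub, div_mul_eq_mul_div, div_le_iff₀ (exp_pos r)] at hZ
    rw [div_mul_eq_mul_div]
    exact div_le_of_le_mul₀ (integral_nonneg fun _ => (exp_pos _).le) (exp_pos r).le
      (by linarith)
  rw [expTilt_restrict_apply hA hAK, ← lintegral_mul_const' _ _ hK.measure_ne_top,
    ← setLIntegral_const]
  refine setLIntegral_mono' hA fun y hy => ?_
  rw [← ofReal_measureReal hK.measure_ne_top, ← ENNReal.ofReal_mul' measureReal_nonneg]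
  exact ENNReal.ofReal_le_ofReal (hdens y (hAK hy))

end TiltedBody

section ConvexBodyPosition

variable {E : Type*} [NormedAddCommGroup E] [InnerProductSpace ℝ E]

theorem polar_image [CompleteSpace E] (T : E →L[ℝ] E) (S : Set E) :
    (innerₗ E).polar (T '' S) =
      ContinuousLinearMap.adjoint T ⁻¹' (innerₗ E).polar S := by
  ext x
  simp only [LinearMap.polar_mem_iff, Set.forall_mem_image, Set.mem_preimage, innerₗ_apply_apply,
    ContinuousLinearMap.adjoint_inner_right]

variable [FiniteDimensional ℝ E]

theorem exists_smul_abs_det_eq_one [Nontrivial E] (T : E ≃L[ℝ] E) :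
    ∃ s : ℝ, 0 < s ∧ s ^ finrank ℝ E = |(T : E →L[ℝ] E).det|⁻¹ ∧
      |(s • (T : E →L[ℝ] E)).det| = 1 := by
  have ht : 0 < |(T : E →L[ℝ] E).det| := abs_pos.2 T.toLinearEquiv.isUnit_det'.ne_zero
  have hs : (|(T : E →L[ℝ] E).det|⁻¹ ^ (finrank ℝ E : ℝ)⁻¹) ^ finrank ℝ E =
      |(T : E →L[ℝ] E).det|⁻¹ := rpow_inv_natCast_pow (by positivity) finrank_pos.ne'
  refine ⟨_, by positivity, hs, ?_⟩
  have hdet (s : ℝ) : (s • (T : E →L[ℝ] E)).det = s ^ finrank ℝ E * (T : E →L[ℝ] E).det :=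
    LinearMap.det_smul s _
  rw [hdet, hs, abs_mul, abs_inv, abs_abs, inv_mul_cancel₀ ht.ne']

variable [MeasurableSpace E] [BorelSpace E]

theorem volume_smul_polar_image_sub (T : E ≃L[ℝ] E) (K : Set E) (l : ℝ) :
    volume (l • (innerₗ E).polar (T '' K - T '' K)) =
      ENNReal.ofReal |(T : E →L[ℝ] E).det|⁻¹ * volume (l • (innerₗ E).polar (K - K)) := by
  have := FiniteDimensional.complete ℝ E
  have hpre := polar_image (T : E →L[ℝ] E) (K - K)
  have hdet := det_adjoint (T : E →L[ℝ] E)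
  have hne : (ContinuousLinearMap.adjoint (T : E →L[ℝ] E)).det ≠ 0 :=
    hdet ▸ T.toLinearEquiv.isUnit_det'.ne_zero
  rw [ContinuousLinearEquiv.coe_coe, Set.image_sub] at hpre
  rw [hpre, Measure.addHaar_smul, Measure.addHaar_smul,
    Measure.addHaar_preimage_continuousLinearMap _ hne, abs_inv, mul_left_comm, ← hdet]

theorem volume_closedBall_mul_sqrt_finrank_le (r : ℝ) :
    volume (closedBall (0 : E) (r * √(finrank ℝ E))) ≤
      ENNReal.ofReal ((√(2 * π) * exp (r ^ 2 / 2)) ^ finrank ℝ E) := by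
  set n := finrank ℝ E
  set c := (√(2 * π) * exp (r ^ 2 / 2)) ^ n
  have hc : 0 < c := by positivity
  have hdens (x : E) (hx : x ∈ closedBall 0 (r * √n)) :
      c⁻¹ ≤ ((2 * π) ^ ((n : ℝ) / 2))⁻¹ * exp (-(‖x‖ ^ 2 / 2)) := by
    have hnorm : ‖x‖ ^ 2 ≤ n * r ^ 2 := by
      calc ‖x‖ ^ 2 ≤ (r * √n) ^ 2 := by gcongr; exact mem_closedBall_zero_iff.1 hx
        _ = n * r ^ 2 := by rw [mul_pow, sq_sqrt n.cast_nonneg, mul_comm]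
    simp only [c]
    rw [mul_pow, mul_inv, rpow_div_two_eq_sqrt _ (by positivity), rpow_natCast, ← exp_nat_mul,
      ← exp_neg]
    gcongr
    linarith
  have hball : MeasurableSet (closedBall (0 : E) (r * √n)) := isClosed_closedBall.measurableSet
  have hmass : ENNReal.ofReal c⁻¹ * volume (closedBall (0 : E) (r * √n)) ≤ 1 := by
    rw [← setLIntegral_const]
    refine (setLIntegral_mono' hball fun x hx => ENNReal.ofReal_le_ofReal (hdens x hx)).trans ?_
    rw [← withDensity_apply _ hball, ← stdGaussian_eq_withDensity]
    exact prob_le_one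
  rwa [ENNReal.ofReal_inv_of_pos hc, ← ENNReal.div_eq_inv_mul,
    ENNReal.div_le_iff (by simpa using hc) ENNReal.ofReal_ne_top, one_mul] at hmass

variable {K : Set E}

theorem isConcentrated_map [Nontrivial E] {ν : Measure E} [IsProbabilityMeasure ν]
    (hK : IsCompact K) (hconv : Convex ℝ K) (hν : MemLp id 2 ν) (hνK : ν Kᶜ = 0)
    (hcontr : HasContractionBound ν K) (T : E ≃L[ℝ] E)
    (hT : covarianceMap (ν.map T) = .id ℝ E) :
    IsConcentrated (ν.map T) (T '' K) (∫ x, x ∂ν.map T) where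
  isCompact := hK.image T.continuous
  convex := hconv.linear_image (T : E →ₗ[ℝ] E)
  contraction := hcontr.map T
  mass := by
    have hTm : AEMeasurable T ν := T.continuous.measurable.aemeasurable
    have : IsProbabilityMeasure (ν.map T) := Measure.isProbabilityMeasure_map hTm
    have hnull : ν.map T (T '' K)ᶜ = 0 := by
      have hemb : MeasurableEmbedding T := T.toHomeomorph.measurableEmbedding
      simpa [hemb.map_apply, Set.preimage_image_eq _ T.injective] using hνK
    rw [Set.inter_comm, measure_inter_conull hnull]
    refine le_measure_closedBall_of_covarianceMap_eq_id ?_ hT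
    rw [memLp_map_measure_iff (by fun_prop) hTm]
    exact hν.continuousLinearMap_comp (T : E →L[ℝ] E)

theorem exists_isConcentrated_map_expTilt [Nontrivial E] (hK : IsCompact K)
    (hconv : Convex ℝ K) (hvol : volume K ≠ 0) :
    ∃ (ξ : E) (T : E ≃L[ℝ] E) (b : E),
      (∀ x ∈ K, ∀ y ∈ K, inner ℝ ξ (x - y) ≤ finrank ℝ E) ∧
      IsProbabilityMeasure (expTilt (volume.restrict K) ξ) ∧
      IsConcentrated ((expTilt (volume.restrict K) ξ).map T) (T '' K) b ∧
      ENNReal.ofReal (|(T : E →L[ℝ] E).det|⁻¹ ^ 2) *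
        volume ((finrank ℝ E : ℝ) • (innerₗ E).polar (K - K)) ≤ volume K := by
  have := FiniteDimensional.complete ℝ E
  set n := finrank ℝ E
  have hn : (0 : ℝ) < n := Nat.cast_pos.2 finrank_pos
  obtain ⟨ξ, hξ, hle⟩ := exists_mem_smul_polar_det_covarianceMap_mul_volume_le hK hconv hvol n
  have hosc : ∀ x ∈ K, ∀ y ∈ K, inner ℝ ξ (x - y) ≤ n := fun x hx y hy => by
    rw [real_inner_comm]
    exact (le_abs_self _).trans ((mem_smul_polar_iff hn).1 hξ _ (Set.sub_mem_sub hx hy))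
  set ν := expTilt (volume.restrict K) ξ
  have : IsFiniteMeasure (volume.restrict K) := ⟨by simpa using hK.measure_lt_top⟩
  have : NeZero (volume.restrict K) := ⟨by simpa using hvol⟩
  have hac : ν ≪ volume.restrict K := tilted_absolutelyContinuous _ _
  obtain ⟨R, hR⟩ := hK.isBounded.exists_norm_le
  have hμR : ∀ᵐ y ∂volume.restrict K, ‖y‖ ≤ R := (ae_restrict_mem hK.measurableSet).mono hR
  have hprob : IsProbabilityMeasure ν := isProbabilityMeasure_expTilt hμR ξ
  have hνK : ν Kᶜ = 0 := hac (by simp [hK.measurableSet])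
  have hL2 : MemLp id 2 ν := memLp_id_of_ae_norm_le (hac.ae_le hμR)
  obtain ⟨T, hT, hdet⟩ := exists_covarianceMap_map_eq_id hL2 fun v hv =>
    covarianceBilin_self_pos hL2 (hac.trans Measure.absolutelyContinuous_restrict) hv
  refine ⟨ξ, T, _, hosc, hprob,
    isConcentrated_map hK hconv hL2 hνK (hasContractionBound_expTilt hconv hosc) T hT, ?_⟩
  rwa [eq_inv_of_mul_eq_one_right hdet, abs_inv, abs_pow, ← inv_pow] at hle

theorem exists_volume_inter_preimage_closedBall_ge [Nontrivial E] (hK : IsCompact K)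
    (hconv : Convex ℝ K) (hvol : volume K ≠ 0) :
    ∃ (T : E ≃L[ℝ] E) (b : E),
      ENNReal.ofReal (IsConcentrated.polarConst ^ finrank ℝ E * |(T : E →L[ℝ] E).det|⁻¹) ≤
        volume K ∧
      ENNReal.ofReal (3 / 4 * exp (-finrank ℝ E)) * volume K ≤
        volume (K ∩ T ⁻¹' closedBall b (2 * √(finrank ℝ E))) := by
  obtain ⟨ξ, T, b, hosc, hprob, hconc, hle⟩ := exists_isConcentrated_map_expTilt hK hconv hvol
  set n := finrank ℝ E
  set ν := expTilt (volume.restrict K) ξ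
  set t := |(T : E →L[ℝ] E).det|⁻¹
  have hT : MeasurableEmbedding T := T.toHomeomorph.measurableEmbedding
  have : IsProbabilityMeasure (ν.map T) :=
    Measure.isProbabilityMeasure_map hT.measurable.aemeasurable
  refine ⟨T, b, ?_, ?_⟩
  · have hpolar := hconc.polarConst_pow_le_volume_smul_polar
      ((nonempty_of_measure_ne_zero hvol).image T)
    rw [volume_smul_polar_image_sub] at hpolar
    calc ENNReal.ofReal (IsConcentrated.polarConst ^ n * t)
        = ENNReal.ofReal t * ENNReal.ofReal (IsConcentrated.polarConst ^ n) := by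
          rw [← ENNReal.ofReal_mul (by positivity), mul_comm]
      _ ≤ ENNReal.ofReal t *
            (ENNReal.ofReal t * volume ((n : ℝ) • (innerₗ E).polar (K - K))) := by gcongr
      _ = ENNReal.ofReal (t ^ 2) * volume ((n : ℝ) • (innerₗ E).polar (K - K)) := by
          rw [← mul_assoc, ← ENNReal.ofReal_mul (by positivity), sq]
      _ ≤ volume K := hle
  · set B := T ⁻¹' closedBall b (2 * √n)
    have hB : MeasurableSet B := hT.measurable isClosed_closedBall.measurableSet
    have hmass : ENNReal.ofReal (3 / 4) ≤ ν (K ∩ B) := by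
      have := hconc.mass
      rwa [hT.map_apply, Set.preimage_inter, Set.preimage_image_eq _ T.injective] at this
    calc ENNReal.ofReal (3 / 4 * exp (-n)) * volume K
        = ENNReal.ofReal (exp (-n)) * (ENNReal.ofReal (3 / 4) * volume K) := by
          rw [← mul_assoc, ← ENNReal.ofReal_mul (exp_nonneg _), mul_comm (exp _)]
      _ ≤ ENNReal.ofReal (exp (-n)) * (ν (K ∩ B) * volume K) := by gcongr
      _ ≤ ENNReal.ofReal (exp (-n)) * (ENNReal.ofReal (exp n) * volume (K ∩ B)) := by
          gcongr _ * ?_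
          exact expTilt_restrict_mul_volume_le hK hosc (hK.measurableSet.inter hB)
            Set.inter_subset_left
      _ = volume (K ∩ B) := by
          rw [← mul_assoc, ← ENNReal.ofReal_mul (exp_nonneg _), ← exp_add]
          simp

/-- The ball which carries a proportion `(3 / (4 e)) ^ n` of a convex body in M-position can be
chosen of volume at most `positionConst ^ n` times that of the body. -/
noncomputable def positionConst : ℝ := √(2 * π) * exp 2 / IsConcentrated.polarConst

theorem positionConst_pos : 0 < positionConst :=
  div_pos (by positivity) IsConcentrated.polarConst_pos

theorem exists_abs_det_eq_one_volume_inter_preimage_closedBall_ge [Nontrivial E]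
    (hK : IsCompact K) (hconv : Convex ℝ K) (hvol : volume K ≠ 0) :
    ∃ (L : E →L[ℝ] E) (b : E) (ρ : ℝ), |L.det| = 1 ∧
      volume (closedBall (0 : E) ρ) ≤
        ENNReal.ofReal (positionConst ^ finrank ℝ E) * volume K ∧
      ENNReal.ofReal ((3 / 4 * exp (-1)) ^ finrank ℝ E) * volume K ≤
        volume (K ∩ L ⁻¹' closedBall b ρ) := by
  obtain ⟨T, b, hlower, hmass⟩ := exists_volume_inter_preimage_closedBall_ge hK hconv hvol
  obtain ⟨s, hs, hsdet, hdet⟩ := exists_smul_abs_det_eq_one T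
  set n := finrank ℝ E
  set c := IsConcentrated.polarConst
  have hc : 0 < c := IsConcentrated.polarConst_pos
  refine ⟨s • (T : E →L[ℝ] E), s • b, s * (2 * √n), hdet, ?_, ?_⟩
  · calc volume (closedBall (0 : E) (s * (2 * √n)))
        = ENNReal.ofReal (s ^ n) * volume (closedBall (0 : E) (2 * √n)) :=
          Measure.addHaar_closedBall_mul_of_pos _ _ hs _
      _ ≤ ENNReal.ofReal (s ^ n) * ENNReal.ofReal ((√(2 * π) * exp 2) ^ n) := by
          have h := volume_closedBall_mul_sqrt_finrank_le (E := E) 2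
          rw [show (2 : ℝ) ^ 2 / 2 = 2 by norm_num] at h
          gcongr
      _ = ENNReal.ofReal (positionConst ^ n) * ENNReal.ofReal (c ^ n * s ^ n) := by
          have hmul : positionConst * c = √(2 * π) * exp 2 := div_mul_cancel₀ _ hc.ne'
          rw [← ENNReal.ofReal_mul (by positivity), ← hmul,
            ← ENNReal.ofReal_mul (pow_nonneg positionConst_pos.le n)]
          ring_nf
      _ ≤ _ := by
          rw [hsdet]
          gcongr
  · have hball : (s • (T : E →L[ℝ] E)) ⁻¹' closedBall (s • b) (s * (2 * √n)) =
        T ⁻¹' closedBall b (2 * √n) := by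
      ext y
      simp [dist_smul₀, abs_of_pos hs, hs]
    rw [hball]
    refine le_trans ?_ hmass
    rw [mul_pow, ← exp_nat_mul, mul_neg_one]
    gcongr
    exact pow_le_of_le_one (by norm_num) (by norm_num) finrank_pos.ne'

end ConvexBodyPosition

section ConvexSetPosition

theorem exists_finite_subset_convexHull_of_isCompact {E : Type*} [NormedAddCommGroup E]
    [NormedSpace ℝ E] [FiniteDimensional ℝ E] {C W : Set E} (hC : IsCompact C) (hW : IsOpen W)
    (hCW : C ⊆ W) : ∃ F ⊆ W, F.Finite ∧ C ⊆ convexHull ℝ F := by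
  refine hC.induction_on (p := fun C => ∃ F ⊆ W, F.Finite ∧ C ⊆ convexHull ℝ F)
    ⟨∅, Set.empty_subset W, Set.finite_empty, Set.empty_subset _⟩ ?_ ?_ ?_
  · rintro C D hCD ⟨F, hFW, hF, hDF⟩
    exact ⟨F, hFW, hF, hCD.trans hDF⟩
  · rintro C D ⟨F, hFW, hF, hCF⟩ ⟨G, hGW, hG, hDG⟩
    exact ⟨F ∪ G, Set.union_subset hFW hGW, hF.union hG, Set.union_subset
      (hCF.trans (convexHull_mono Set.subset_union_left))
      (hDG.trans (convexHull_mono Set.subset_union_right))⟩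
  · intro x hx
    obtain ⟨b, hxb, hbW⟩ := exists_mem_interior_convexHull_affineBasis (hW.mem_nhds (hCW hx))
    exact ⟨convexHull ℝ (Set.range b), mem_nhdsWithin_of_mem_nhds (mem_interior_iff_mem_nhds.1 hxb),
      Set.range b, (subset_convexHull ℝ _).trans hbW, Set.finite_range b, subset_rfl⟩

variable {E : Type*} [NormedAddCommGroup E] [InnerProductSpace ℝ E] [FiniteDimensional ℝ E]
  [MeasurableSpace E] [BorelSpace E]

theorem exists_isCompact_convex_lt_volume {W : Set E} (hW : IsOpen W) (hconv : Convex ℝ W)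
    {a : ℝ≥0∞} (ha : a < volume W) :
    ∃ K ⊆ W, IsCompact K ∧ Convex ℝ K ∧ a < volume K := by
  obtain ⟨C, hCW, hC, haC⟩ := hW.exists_lt_isCompact ha
  obtain ⟨F, hFW, hF, hCF⟩ := exists_finite_subset_convexHull_of_isCompact hC hW hCW
  exact ⟨convexHull ℝ F, convexHull_min hFW hconv, hF.isCompact_convexHull ℝ,
    convex_convexHull ℝ F, haC.trans_le (measure_mono hCF)⟩

theorem le_mul_of_volume_closedBall_le [Nontrivial E] {r ρ C : ℝ} (hr : 0 < r) (hC : 0 ≤ C)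
    (hball : volume (ball (0 : E) r) = 1)
    (hle : volume (closedBall (0 : E) ρ) ≤ ENNReal.ofReal (C ^ finrank ℝ E)) :
    ρ ≤ C * r := by
  rcases lt_or_ge ρ 0 with hρ | hρ
  · exact hρ.le.trans (by positivity)
  have hvol : volume (closedBall (0 : E) ρ) = ENNReal.ofReal ((ρ / r) ^ finrank ℝ E) := by
    rw [← div_mul_cancel₀ ρ hr.ne', Measure.addHaar_closedBall_mul _ _ (by positivity) hr.le,
      Measure.addHaar_closedBall_eq_addHaar_ball, hball, mul_one, div_mul_cancel₀ ρ hr.ne']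
  rw [hvol, ENNReal.ofReal_le_ofReal_iff (by positivity)] at hle
  rw [← div_le_iff₀ hr]
  exact le_of_pow_le_pow_left₀ finrank_pos.ne' hC hle

theorem pow_mul_volume_inter_preimage_closedBall_le {K : Set E} (hK : Convex ℝ K)
    (L : E →L[ℝ] E) {z b : E} {ρ κ r : ℝ} (hzK : z ∈ K) (hzb : L z ∈ closedBall b ρ)
    (hκ₀ : 0 ≤ κ) (hκ₁ : κ ≤ 1) (hκ : κ * (2 * ρ) < r) :
    ENNReal.ofReal (κ ^ finrank ℝ E) * volume (K ∩ L ⁻¹' closedBall b ρ) ≤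
      volume (K ∩ L ⁻¹' ball (L z) r) := by
  rw [← abs_of_nonneg (pow_nonneg hκ₀ _), ← Measure.addHaar_image_homothety volume z]
  refine measure_mono ?_
  rintro _ ⟨y, ⟨hyK, hyb⟩, rfl⟩
  refine ⟨AffineMap.homothety_eq_lineMap z κ y ▸ hK.lineMap_mem hzK hyK ⟨hκ₀, hκ₁⟩, ?_⟩
  have hdist : dist (L y) (L z) ≤ 2 * ρ := by
    linarith [dist_triangle_right (L y) (L z) b, mem_closedBall.1 hyb, mem_closedBall.1 hzb]
  have hshrink : L (AffineMap.homothety z κ y) - L z = κ • (L y - L z) := by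
    simp [AffineMap.homothety_apply]
  rw [Set.mem_preimage, mem_ball, dist_eq_norm, hshrink, norm_smul, Real.norm_of_nonneg hκ₀,
    ← dist_eq_norm]
  exact (mul_le_mul_of_nonneg_left hdist hκ₀).trans_lt hκ

/-- The base of the exponential lower bound for the proportion of an open convex set of volume
at most `A ^ n` that is captured by the ball of volume one in a suitable position. -/
noncomputable def captureConst (A : ℝ) : ℝ :=
  1 / 2 * (3 / 4 * exp (-1)) * (2 * (positionConst * A) + 1)⁻¹

theorem captureConst_pos {A : ℝ} (hA : 0 ≤ A) : 0 < captureConst A := by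
  have := positionConst_pos
  unfold captureConst
  positivity

theorem captureConst_lt_one {A : ℝ} (hA : 0 ≤ A) : captureConst A < 1 := by
  have hposition := positionConst_pos
  have hexp : exp (-1) ≤ 1 := exp_le_one_iff.2 (by norm_num)
  have hinv : (2 * (positionConst * A) + 1)⁻¹ ≤ 1 :=
    inv_le_one_of_one_le₀ (le_add_of_nonneg_left (by positivity))
  calc captureConst A ≤ 1 / 2 * (3 / 4 * 1) * 1 := by unfold captureConst; gcongr
    _ < 1 := by norm_num

theorem exists_abs_det_eq_one_le_volume_inter_preimage_ball [Nontrivial E] {W : Set E}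
    (hW : IsOpen W) (hconv : Convex ℝ W) (hne : W.Nonempty) {A : ℝ} (hA : 0 ≤ A)
    (hvol : volume W ≤ ENNReal.ofReal (A ^ finrank ℝ E)) :
    ∃ (L : E →L[ℝ] E) (z : E), |L.det| = 1 ∧ ∀ r : ℝ, 0 < r → volume (ball (0 : E) r) = 1 →
      ENNReal.ofReal (captureConst A ^ finrank ℝ E) * volume W ≤
        volume (W ∩ L ⁻¹' ball (L z) r) := by
  set n := finrank ℝ E
  have hW₀ : volume W ≠ 0 := (hW.measure_pos volume hne).ne'
  obtain ⟨K, hKW, hK, hKconv, hWK⟩ := exists_isCompact_convex_lt_volume hW hconv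
    (ENNReal.half_lt_self hW₀ (ne_top_of_le_ne_top ENNReal.ofReal_ne_top hvol))
  obtain ⟨L, b, ρ, hdet, hρ, hcapture⟩ :=
    exists_abs_det_eq_one_volume_inter_preimage_closedBall_ge hK hKconv
      (ne_zero_of_lt hWK)
  obtain ⟨z, hzK, hzb⟩ : (K ∩ L ⁻¹' closedBall b ρ).Nonempty := by
    refine nonempty_of_measure_ne_zero (μ := volume) (ne_of_gt (lt_of_lt_of_le ?_ hcapture))
    exact ENNReal.mul_pos (ENNReal.ofReal_pos.2 (by positivity)).ne' (ne_zero_of_lt hWK)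
  refine ⟨L, z, hdet, fun r hr hball => ?_⟩
  have hposition := positionConst_pos
  have hρr : ρ ≤ positionConst * A * r := by
    refine le_mul_of_volume_closedBall_le hr (by positivity) hball (hρ.trans ?_)
    rw [mul_pow, ENNReal.ofReal_mul (by positivity)]
    gcongr
    exact (measure_mono hKW).trans hvol
  set κ : ℝ := (2 * (positionConst * A) + 1)⁻¹ with hκ
  have hκr : κ * (2 * ρ) < r := by
    rw [hκ, inv_mul_lt_iff₀ (by positivity)]
    linarith
  calc ENNReal.ofReal (captureConst A ^ n) * volume W
      = ENNReal.ofReal (κ ^ n) * (ENNReal.ofReal ((3 / 4 * exp (-1)) ^ n) *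
          (ENNReal.ofReal ((1 / 2) ^ n) * volume W)) := by
        rw [captureConst, ← hκ, mul_pow, mul_pow (1 / 2), ENNReal.ofReal_mul (by positivity),
          ENNReal.ofReal_mul (by positivity)]
        ring
    _ ≤ ENNReal.ofReal (κ ^ n) * (ENNReal.ofReal ((3 / 4 * exp (-1)) ^ n) * volume K) := by
        gcongr
        refine le_trans ?_ hWK.le
        rw [ENNReal.div_eq_inv_mul, ← ENNReal.ofReal_ofNat, ← ENNReal.ofReal_inv_of_pos two_pos]
        gcongr
        rw [← one_div]
        exact pow_le_of_le_one (by norm_num) (by norm_num) finrank_pos.ne'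
    _ ≤ ENNReal.ofReal (κ ^ n) * volume (K ∩ L ⁻¹' closedBall b ρ) := by gcongr
    _ ≤ volume (K ∩ L ⁻¹' ball (L z) r) :=
        pow_mul_volume_inter_preimage_closedBall_le hKconv L hzK hzb (by positivity)
          (inv_le_one_of_one_le₀ (le_add_of_nonneg_left (by positivity))) hκr
    _ ≤ volume (W ∩ L ⁻¹' ball (L z) r) := by gcongr

end ConvexSetPosition

section ShellEstimates

theorem setLIntegral_iUnion_le_add_tsum {α : Type*} [MeasurableSpace α] {μ : Measure α}
    {L : ℕ → Set α} (hL : ∀ k, MeasurableSet (L k)) {g : α → ℝ≥0∞} {c : ℕ → ℝ≥0∞}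
    (hg : ∀ k, ∀ x ∈ L (k + 1) \ L k, g x ≤ c k) :
    ∫⁻ x in ⋃ k, L k, g x ∂μ ≤ ∫⁻ x in L 0, g x ∂μ + ∑' k, c k * μ (L (k + 1)) := by
  have hcover : ⋃ k, L k ⊆ L 0 ∪ ⋃ k, L (k + 1) \ L k := by
    refine Set.iUnion_subset fun k => ?_
    induction k with
    | zero => exact Set.subset_union_left
    | succ k ih =>
      intro x hx
      by_cases hxk : x ∈ L k
      · exact ih hxk
      · exact Or.inr (Set.mem_iUnion.2 ⟨k, hx, hxk⟩)
  have hshell : ∀ k, ∫⁻ x in L (k + 1) \ L k, g x ∂μ ≤ c k * μ (L (k + 1)) := fun k =>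
    calc ∫⁻ x in L (k + 1) \ L k, g x ∂μ
        ≤ ∫⁻ _ in L (k + 1) \ L k, c k ∂μ := setLIntegral_mono' ((hL _).diff (hL _)) (hg k)
      _ = c k * μ (L (k + 1) \ L k) := setLIntegral_const _ _
      _ ≤ c k * μ (L (k + 1)) := by gcongr; exact Set.sdiff_subset
  calc ∫⁻ x in ⋃ k, L k, g x ∂μ
      ≤ ∫⁻ x in L 0 ∪ ⋃ k, L (k + 1) \ L k, g x ∂μ := lintegral_mono_set hcover
    _ ≤ ∫⁻ x in L 0, g x ∂μ + ∫⁻ x in ⋃ k, L (k + 1) \ L k, g x ∂μ :=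
        lintegral_union_le _ _ _
    _ ≤ ∫⁻ x in L 0, g x ∂μ + ∑' k, ∫⁻ x in L (k + 1) \ L k, g x ∂μ := by
        gcongr
        exact lintegral_iUnion_le _ _
    _ ≤ ∫⁻ x in L 0, g x ∂μ + ∑' k, c k * μ (L (k + 1)) := by
        gcongr with k
        exact hshell k

theorem mul_exp_neg_le_rpow_neg {m v β d : ℝ} (hm : 0 < m) (hv : 0 < v) (hβ : 0 < β)
    (hd : 0 ≤ d) (hle : v ≤ m + m * (d / β)) : m ^ (-β) * exp (-d) ≤ v ^ (-β) := by
  have hpow : (1 + d / β) ^ β ≤ exp d := by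
    calc (1 + d / β) ^ β ≤ exp (d / β) ^ β := by
          gcongr
          linarith [add_one_le_exp (d / β)]
      _ = exp d := by rw [← exp_mul, div_mul_cancel₀ d hβ.ne']
  calc m ^ (-β) * exp (-d) ≤ m ^ (-β) * (1 + d / β) ^ (-β) := by
        rw [exp_neg, rpow_neg (by positivity : 0 ≤ 1 + d / β)]
        gcongr
    _ = (m + m * (d / β)) ^ (-β) := by
        rw [← mul_rpow hm.le (by positivity), mul_add, mul_one]
    _ ≤ v ^ (-β) := rpow_le_rpow_of_nonpos hv hle (by linarith)

theorem rpow_neg_le_mul_rpow_pow {m v β β₀ s : ℝ} {n : ℕ} (hm : 0 < m) (hβ₀ : 0 < β₀)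
    (hn : 0 < n) (hβ : β₀ * n ≤ β) (hs : 0 < s) (hle : m + s * (m * (n / β)) ≤ v) :
    v ^ (-β) ≤ m ^ (-β) * ((β₀ / s) ^ β₀) ^ n := by
  have hβ₀n : 0 < β₀ * n := by positivity
  have hβpos : 0 < β := hβ₀n.trans_le hβ
  have hbase : 0 ≤ 1 + s * (n / β) := by positivity
  have hbernoulli : s / β₀ ≤ (1 + s * (n / β)) ^ (β / (β₀ * n)) := by
    have hexponent : 1 ≤ β / (β₀ * n) := (one_le_div hβ₀n).2 hβ
    have hlower : -1 ≤ s * (n / β) := (neg_nonpos.2 zero_le_one).trans (by positivity)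
    have hslope : β / (β₀ * n) * (s * (n / β)) = s / β₀ := by field_simp
    linarith [one_add_mul_self_le_rpow_one_add hlower hexponent]
  have hfactor : (1 + s * (n / β)) ^ (-β) ≤ ((β₀ / s) ^ β₀) ^ n := by
    calc (1 + s * (n / β)) ^ (-β)
        = ((1 + s * (n / β)) ^ (β / (β₀ * n))) ^ (-(β₀ * n)) := by
          rw [← rpow_mul hbase, mul_neg, div_mul_cancel₀ β hβ₀n.ne']
      _ ≤ (s / β₀) ^ (-(β₀ * n)) :=
          rpow_le_rpow_of_nonpos (by positivity) hbernoulli (by linarith)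
      _ = ((β₀ / s) ^ β₀) ^ n := by
          rw [rpow_neg (by positivity), ← inv_rpow (by positivity), inv_div,
            rpow_mul_natCast (by positivity)]
  calc v ^ (-β) ≤ (m + s * (m * (n / β))) ^ (-β) :=
        rpow_le_rpow_of_nonpos (by positivity) hle (by linarith)
    _ = m ^ (-β) * (1 + s * (n / β)) ^ (-β) := by
        rw [← mul_rpow hm.le hbase]
        ring_nf
    _ ≤ m ^ (-β) * ((β₀ / s) ^ β₀) ^ n := by gcongr

theorem div_rpow_pow_mul_two_pow_le {β₀ : ℝ} {n : ℕ} (hβ₀ : 1 ≤ β₀) (hn : n ≠ 0) (k : ℕ) :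
    ((β₀ / 2 ^ k) ^ β₀) ^ n * (2 ^ (k + 1)) ^ n ≤
      (2 * β₀ ^ β₀) ^ n * ((2 : ℝ) ^ (1 - β₀)) ^ k := by
  have hratio : (2 : ℝ) ^ (1 - β₀) ≤ 1 := rpow_le_one_of_one_le_of_nonpos one_le_two (by linarith)
  have hterm : (β₀ / 2 ^ k) ^ β₀ * 2 ^ (k + 1) = 2 * β₀ ^ β₀ * ((2 : ℝ) ^ (1 - β₀)) ^ k := by
    rw [div_rpow (by positivity) (by positivity), rpow_sub two_pos, rpow_one, div_pow,
      rpow_pow_comm two_pos.le]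
    ring
  rw [← mul_pow, hterm, mul_pow]
  gcongr
  exact pow_le_of_le_one (by positivity) (pow_le_one₀ (by positivity) hratio) hn

end ShellEstimates

section ConvexSublevel

theorem two_rpow_one_sub_lt_one {β₀ : ℝ} (hβ₀ : 1 < β₀) : (2 : ℝ) ^ (1 - β₀) < 1 :=
  rpow_lt_one_of_one_lt_of_neg one_lt_two (sub_neg.2 hβ₀)

/-- The base of the exponential bound comparing the total mass of a density `V ^ (-β)`, where
`V` is convex, with its mass near a point where it is almost maximal. -/
noncomputable def massConst (β₀ : ℝ) : ℝ :=
  2 + 2 * β₀ ^ β₀ * (1 - 2 ^ (1 - β₀))⁻¹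

theorem one_lt_massConst {β₀ : ℝ} (hβ₀ : 1 < β₀) : 1 < massConst β₀ := by
  have hgap : 0 < 1 - (2 : ℝ) ^ (1 - β₀) := sub_pos.2 (two_rpow_one_sub_lt_one hβ₀)
  have hsecond : 0 < 2 * β₀ ^ β₀ * (1 - 2 ^ (1 - β₀))⁻¹ := by positivity
  unfold massConst
  linarith

theorem add_pow_mul_inv_le_massConst_pow {β₀ : ℝ} {n : ℕ} (hβ₀ : 1 < β₀) (hn : n ≠ 0) :
    2 + (2 * β₀ ^ β₀) ^ n * (1 - 2 ^ (1 - β₀))⁻¹ ≤ massConst β₀ ^ n := by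
  have hgap : 0 < 1 - (2 : ℝ) ^ (1 - β₀) := sub_pos.2 (two_rpow_one_sub_lt_one hβ₀)
  have hinv : 1 ≤ (1 - (2 : ℝ) ^ (1 - β₀))⁻¹ :=
    one_le_inv_iff₀.2 ⟨hgap, sub_le_self _ (by positivity)⟩
  calc 2 + (2 * β₀ ^ β₀) ^ n * (1 - 2 ^ (1 - β₀))⁻¹
      ≤ 2 ^ n + (2 * β₀ ^ β₀) ^ n * (1 - 2 ^ (1 - β₀))⁻¹ ^ n := by
        gcongr
        · exact le_self_pow₀ one_le_two hn
        · exact le_self_pow₀ hinv hn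
    _ = 2 ^ n + (2 * β₀ ^ β₀ * (1 - 2 ^ (1 - β₀))⁻¹) ^ n := by rw [mul_pow (2 * β₀ ^ β₀)]
    _ ≤ massConst β₀ ^ n := pow_add_pow_le two_pos.le (by positivity) hn

/-- The part of `S` on which `V` takes values below `c`. -/
def sublevelSet {E : Type*} (S : Set E) (V : E → ℝ) (c : ℝ) : Set E :=
  {x ∈ S | V x < c}

theorem iUnion_sublevelSet_add_two_pow_mul {E : Type*} (S : Set E) (V : E → ℝ) (c : ℝ) {δ : ℝ}
    (hδ : 0 < δ) : ⋃ k : ℕ, sublevelSet S V (c + 2 ^ k * δ) = S := by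
  refine Set.Subset.antisymm (Set.iUnion_subset fun k => Set.sep_subset _ _) fun x hx => ?_
  obtain ⟨k, hk⟩ := pow_unbounded_of_one_lt ((V x - c) / δ) one_lt_two
  rw [div_lt_iff₀ hδ] at hk
  exact Set.mem_iUnion.2 ⟨k, hx, by linarith⟩

variable {E : Type*} [NormedAddCommGroup E] [NormedSpace ℝ E] [FiniteDimensional ℝ E]
  {S : Set E} {V : E → ℝ}

theorem isOpen_sublevelSet (hS : IsOpen S) (hV : ConvexOn ℝ S V) (c : ℝ) :
    IsOpen (sublevelSet S V c) :=
  (hV.continuousOn hS).isOpen_inter_preimage hS isOpen_Iio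

variable [MeasurableSpace E] [BorelSpace E] (μ : Measure E) [μ.IsAddHaarMeasure]

-- Convexity of `V` along the segment to `x₀` shows that contracting the larger sublevel set
-- towards `x₀` by the factor `s⁻¹` maps it into the smaller one.
theorem measure_sublevelSet_add_mul_le (hV : ConvexOn ℝ S V) {x₀ : E} (hx₀ : x₀ ∈ S) (δ : ℝ)
    {s : ℝ} (hs : 1 ≤ s) :
    μ (sublevelSet S V (V x₀ + s * δ)) ≤
      ENNReal.ofReal (s ^ finrank ℝ E) * μ (sublevelSet S V (V x₀ + δ)) := by
  have hs₀ : 0 < s := one_pos.trans_le hs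
  have hs₁ : 0 ≤ 1 - s⁻¹ := sub_nonneg.2 (inv_le_one_of_one_le₀ hs)
  have hcontract : AffineMap.homothety x₀ s⁻¹ '' sublevelSet S V (V x₀ + s * δ) ⊆
      sublevelSet S V (V x₀ + δ) := by
    rintro _ ⟨x, ⟨hxS, hxV⟩, rfl⟩
    rw [AffineMap.homothety_eq_lineMap, AffineMap.lineMap_apply_module]
    refine ⟨hV.1 hx₀ hxS hs₁ (by positivity) (by ring), ?_⟩
    calc V ((1 - s⁻¹) • x₀ + s⁻¹ • x) ≤ (1 - s⁻¹) * V x₀ + s⁻¹ * V x :=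
          hV.2 hx₀ hxS hs₁ (by positivity) (by ring)
      _ < (1 - s⁻¹) * V x₀ + s⁻¹ * (V x₀ + s * δ) := by gcongr
      _ = V x₀ + δ := by field_simp; ring
  have hvol := measure_mono (μ := μ) hcontract
  rw [Measure.addHaar_image_homothety, abs_of_pos (by positivity)] at hvol
  calc μ (sublevelSet S V (V x₀ + s * δ))
      = ENNReal.ofReal (s ^ finrank ℝ E) * (ENNReal.ofReal (s⁻¹ ^ finrank ℝ E) *
          μ (sublevelSet S V (V x₀ + s * δ))) := by
        rw [← mul_assoc, ← ENNReal.ofReal_mul (by positivity), ← mul_pow,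
          mul_inv_cancel₀ hs₀.ne', one_pow, ENNReal.ofReal_one, one_mul]
    _ ≤ ENNReal.ofReal (s ^ finrank ℝ E) * μ (sublevelSet S V (V x₀ + δ)) := by gcongr

variable {μ} [Nontrivial E] {β β₀ : ℝ} {x₀ : E}

theorem tsum_shell_le (hV : ConvexOn ℝ S V) (hx₀ : x₀ ∈ S) (hβ₀ : 1 < β₀) {a δ : ℝ}
    (ha : 0 ≤ a) :
    ∑' k : ℕ, ENNReal.ofReal (a * ((β₀ / 2 ^ k) ^ β₀) ^ finrank ℝ E) *
        μ (sublevelSet S V (V x₀ + 2 ^ (k + 1) * δ)) ≤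
      ENNReal.ofReal (a * ((2 * β₀ ^ β₀) ^ finrank ℝ E * (1 - 2 ^ (1 - β₀))⁻¹)) *
        μ (sublevelSet S V (V x₀ + δ)) := by
  set n := finrank ℝ E
  have hratio : (2 : ℝ) ^ (1 - β₀) < 1 := two_rpow_one_sub_lt_one hβ₀
  have hterm (k : ℕ) : ENNReal.ofReal (a * ((β₀ / 2 ^ k) ^ β₀) ^ n) *
      μ (sublevelSet S V (V x₀ + 2 ^ (k + 1) * δ)) ≤
      ENNReal.ofReal (a * ((2 * β₀ ^ β₀) ^ n * (2 ^ (1 - β₀)) ^ k)) *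
        μ (sublevelSet S V (V x₀ + δ)) := by
    calc _ ≤ ENNReal.ofReal (a * ((β₀ / 2 ^ k) ^ β₀) ^ n) *
          (ENNReal.ofReal ((2 ^ (k + 1)) ^ n) * μ (sublevelSet S V (V x₀ + δ))) := by
          gcongr
          exact measure_sublevelSet_add_mul_le μ hV hx₀ δ (one_le_pow₀ one_le_two)
      _ ≤ _ := by
          rw [← mul_assoc, ← ENNReal.ofReal_mul (by positivity), mul_assoc a]
          gcongr ENNReal.ofReal (a * ?_) * _
          exact div_rpow_pow_mul_two_pow_le hβ₀.le (finrank_pos (R := ℝ) (M := E)).ne' k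
  refine (ENNReal.tsum_le_tsum hterm).trans_eq ?_
  have hsum := summable_geometric_of_lt_one (by positivity) hratio
  rw [ENNReal.tsum_mul_right, ← ENNReal.ofReal_tsum_of_nonneg (fun k => by positivity)
    ((hsum.mul_left _).mul_left _), tsum_mul_left, tsum_mul_left,
    tsum_geometric_of_lt_one (by positivity) hratio]

-- On the dyadic shell where `V` lies between `V x₀ + 2 ^ k * δ` and `V x₀ + 2 ^ (k + 1) * δ` the
-- decay of `V ^ (-β)` beats the growth of the volume, as `β₀ > 1`.
theorem setLIntegral_rpow_neg_le (hS : IsOpen S) (hV : ConvexOn ℝ S V) (hVpos : ∀ x ∈ S, 0 < V x)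
    (hβ₀ : 1 < β₀) (hβ : β₀ * finrank ℝ E ≤ β) (hx₀ : x₀ ∈ S)
    (hmax : ∀ᵐ x ∂μ.restrict S, V x ^ (-β) ≤ 2 * V x₀ ^ (-β)) :
    ∫⁻ x in S, ENNReal.ofReal (V x ^ (-β)) ∂μ ≤
      ENNReal.ofReal (V x₀ ^ (-β) * massConst β₀ ^ finrank ℝ E) *
        μ (sublevelSet S V (V x₀ + V x₀ * (finrank ℝ E / β))) := by
  set n := finrank ℝ E
  have hn : 0 < n := finrank_pos
  have hβpos : 0 < β := lt_of_lt_of_le (by positivity) hβ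
  have hm : 0 < V x₀ := hVpos x₀ hx₀
  set a := V x₀ ^ (-β)
  have ha : 0 < a := rpow_pos_of_pos hm _
  set δ := V x₀ * (n / β)
  have hδpos : 0 < δ := by positivity
  set L : ℕ → Set E := fun k => sublevelSet S V (V x₀ + 2 ^ k * δ) with hL
  have hL₀ : L 0 = sublevelSet S V (V x₀ + δ) := by simp [hL]
  have hshell : ∀ k, ∀ x ∈ L (k + 1) \ L k,
      ENNReal.ofReal (V x ^ (-β)) ≤ ENNReal.ofReal (a * ((β₀ / 2 ^ k) ^ β₀) ^ n) := by
    rintro k x ⟨⟨hxS, -⟩, hxL⟩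
    refine ENNReal.ofReal_le_ofReal (rpow_neg_le_mul_rpow_pow hm (by positivity) hn hβ
      (by positivity) (not_lt.1 fun hlt => hxL ⟨hxS, hlt⟩))
  have hcore : ∫⁻ x in L 0, ENNReal.ofReal (V x ^ (-β)) ∂μ ≤
      ENNReal.ofReal (2 * a) * μ (L 0) := by
    rw [← setLIntegral_const]
    refine lintegral_mono_ae ((ae_restrict_of_ae_restrict_of_subset (Set.sep_subset _ _) hmax).mono
      fun x hx => ENNReal.ofReal_le_ofReal hx)
  calc ∫⁻ x in S, ENNReal.ofReal (V x ^ (-β)) ∂μ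
      = ∫⁻ x in ⋃ k, L k, ENNReal.ofReal (V x ^ (-β)) ∂μ := by
        rw [hL, iUnion_sublevelSet_add_two_pow_mul S V _ hδpos]
    _ ≤ ENNReal.ofReal (2 * a) * μ (L 0) +
          ENNReal.ofReal (a * ((2 * β₀ ^ β₀) ^ n * (1 - 2 ^ (1 - β₀))⁻¹)) * μ (L 0) := by
        refine (setLIntegral_iUnion_le_add_tsum
          (fun k => (isOpen_sublevelSet hS hV _).measurableSet) hshell).trans (add_le_add hcore ?_)
        rw [hL₀]
        exact tsum_shell_le hV hx₀ hβ₀ ha.le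
    _ = ENNReal.ofReal (a * (2 + (2 * β₀ ^ β₀) ^ n * (1 - 2 ^ (1 - β₀))⁻¹)) * μ (L 0) := by
        have hgap : 0 < 1 - (2 : ℝ) ^ (1 - β₀) := sub_pos.2 (two_rpow_one_sub_lt_one hβ₀)
        rw [← add_mul, ← ENNReal.ofReal_add (by positivity) (by positivity)]
        ring_nf
    _ ≤ ENNReal.ofReal (a * massConst β₀ ^ n) * μ (sublevelSet S V (V x₀ + δ)) := by
        rw [hL₀]
        gcongr
        exact add_pow_mul_inv_le_massConst_pow hβ₀ hn.ne'

end ConvexSublevel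

section NearMaximum

variable {E : Type*} {S : Set E} {V : E → ℝ} {β d : ℝ} {x₀ : E} [MeasurableSpace E] {μ : Measure E}

theorem mul_measure_le_setLIntegral_rpow_neg (hVpos : ∀ x ∈ S, 0 < V x) (hx₀ : x₀ ∈ S)
    (hβ : 0 < β) (hd : 0 ≤ d) {Y : Set E} (hY : MeasurableSet Y)
    (hYV : Y ⊆ sublevelSet S V (V x₀ + V x₀ * (d / β))) :
    ENNReal.ofReal (V x₀ ^ (-β) * exp (-d)) * μ Y ≤
      ∫⁻ x in Y, ENNReal.ofReal (V x ^ (-β)) ∂μ := by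
  rw [← setLIntegral_const]
  exact setLIntegral_mono' hY fun x hx => ENNReal.ofReal_le_ofReal
    (mul_exp_neg_le_rpow_neg (hVpos x₀ hx₀) (hVpos x (hYV hx).1) hβ hd (hYV hx).2.le)

theorem measure_sublevelSet_le {n : ℕ} (hn : n ≠ 0) (hVpos : ∀ x ∈ S, 0 < V x) (hx₀ : x₀ ∈ S)
    (hβ : 0 < β) (hmeas : MeasurableSet (sublevelSet S V (V x₀ + V x₀ * (n / β))))
    (hmass : ∫⁻ x in S, ENNReal.ofReal (V x ^ (-β)) ∂μ ≤ 1) (hhalf : 1 / 2 ≤ V x₀ ^ (-β)) :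
    μ (sublevelSet S V (V x₀ + V x₀ * (n / β))) ≤ ENNReal.ofReal ((2 * exp 1) ^ n) := by
  set W := sublevelSet S V (V x₀ + V x₀ * (n / β))
  have hle : ENNReal.ofReal (V x₀ ^ (-β) * exp (-n)) * μ W ≤ 1 :=
    (mul_measure_le_setLIntegral_rpow_neg hVpos hx₀ hβ n.cast_nonneg hmeas subset_rfl).trans
      ((lintegral_mono_set (Set.sep_subset _ _)).trans hmass)
  have hfactor : 1 ≤ (2 * exp 1) ^ n * (V x₀ ^ (-β) * exp (-n)) := by
    calc (1 : ℝ) = 2 * exp n * (1 / 2 * exp (-n)) := by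
          rw [exp_neg]
          field_simp
      _ ≤ 2 ^ n * exp n * (V x₀ ^ (-β) * exp (-n)) := by
          gcongr
          exact le_self_pow₀ one_le_two hn
      _ = (2 * exp 1) ^ n * (V x₀ ^ (-β) * exp (-n)) := by
          rw [mul_pow, ← exp_nat_mul, mul_one]
  calc μ W ≤ ENNReal.ofReal ((2 * exp 1) ^ n * (V x₀ ^ (-β) * exp (-n))) * μ W :=
        le_mul_of_one_le_left' (ENNReal.one_le_ofReal.2 hfactor)
    _ = ENNReal.ofReal ((2 * exp 1) ^ n) * (ENNReal.ofReal (V x₀ ^ (-β) * exp (-n)) * μ W) := by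
        rw [ENNReal.ofReal_mul (by positivity), mul_assoc]
    _ ≤ ENNReal.ofReal ((2 * exp 1) ^ n) := mul_le_of_le_one_right' hle

theorem exists_half_lt_and_ae_le_two_mul {f : E → ℝ}
    (hf : 0 < (essSup (fun x => ENNReal.ofReal (f x)) μ).toReal) :
    ∃ x₀, (essSup (fun x => ENNReal.ofReal (f x)) μ).toReal / 2 < f x₀ ∧
      ∀ᵐ x ∂μ, f x ≤ 2 * f x₀ := by
  set M := essSup (fun x => ENNReal.ofReal (f x)) μ
  obtain ⟨hM₀, hM⟩ := ENNReal.toReal_pos_iff.1 hf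
  obtain ⟨x₀, hx₀⟩ : ∃ x₀, M / 2 < ENNReal.ofReal (f x₀) := by
    by_contra! hle
    exact (ENNReal.half_lt_self hM₀.ne' hM.ne).not_ge
      (essSup_le_of_ae_le _ (Filter.Eventually.of_forall hle))
  have hlt : M.toReal / 2 < f x₀ := by
    have hlt := (ENNReal.lt_ofReal_iff_toReal_lt (ENNReal.div_ne_top hM.ne two_ne_zero)).1 hx₀
    rwa [ENNReal.toReal_div, ENNReal.toReal_ofNat] at hlt
  refine ⟨x₀, hlt, ?_⟩
  filter_upwards [ENNReal.ae_le_essSup (μ := μ) fun x => ENNReal.ofReal (f x)] with x hx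
  linarith [(ENNReal.ofReal_le_iff_le_toReal hM.ne).1 hx]

end NearMaximum

section BallMass

/-- The base `c₀` of the exponential lower bound for the mass of the ball of volume one. -/
noncomputable def ballMassConst (β₀ : ℝ) : ℝ :=
  exp (-1) * captureConst (2 * exp 1) * (massConst β₀)⁻¹

theorem ballMassConst_pos {β₀ : ℝ} (hβ₀ : 1 < β₀) : 0 < ballMassConst β₀ := by
  have hcapture := captureConst_pos (A := 2 * exp 1) (by positivity)
  have hmass := one_lt_massConst hβ₀
  unfold ballMassConst
  positivity

theorem ballMassConst_lt_one {β₀ : ℝ} (hβ₀ : 1 < β₀) : ballMassConst β₀ < 1 := by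
  have hcapture := captureConst_pos (A := 2 * exp 1) (by positivity)
  have hmass := one_lt_massConst hβ₀
  calc ballMassConst β₀ ≤ 1 * captureConst (2 * exp 1) * 1 := by
        unfold ballMassConst
        gcongr
        · exact exp_le_one_iff.2 (by norm_num)
        · exact inv_le_one_of_one_le₀ hmass.le
    _ < 1 := by
        rw [one_mul, mul_one]
        exact captureConst_lt_one (by positivity)

theorem ballMassConst_pow_mul {β₀ : ℝ} (hβ₀ : 1 < β₀) (n : ℕ) (a : ℝ) :
    ballMassConst β₀ ^ n * (a * massConst β₀ ^ n) =
      a * exp (-n) * captureConst (2 * exp 1) ^ n := by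
  have hmass := one_lt_massConst hβ₀
  rw [ballMassConst, mul_pow, mul_pow, ← exp_nat_mul, mul_neg_one, inv_pow]
  field_simp

variable {E : Type*} [NormedAddCommGroup E] [InnerProductSpace ℝ E] [FiniteDimensional ℝ E]
  [Nontrivial E] [MeasurableSpace E] [BorelSpace E] {S : Set E} {V : E → ℝ} {β β₀ : ℝ} {x₀ : E}

theorem exists_abs_det_eq_one_le_setLIntegral_rpow_neg (hS : IsOpen S) (hV : ConvexOn ℝ S V)
    (hVpos : ∀ x ∈ S, 0 < V x) (hβ₀ : 1 < β₀) (hβ : β₀ * finrank ℝ E ≤ β) (hx₀ : x₀ ∈ S)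
    (hmass : ∫⁻ x in S, ENNReal.ofReal (V x ^ (-β)) = 1) (hhalf : 1 / 2 ≤ V x₀ ^ (-β))
    (hmax : ∀ᵐ x ∂volume.restrict S, V x ^ (-β) ≤ 2 * V x₀ ^ (-β)) :
    ∃ (L : E →L[ℝ] E) (z : E), |L.det| = 1 ∧ ∀ r : ℝ, 0 < r → volume (ball (0 : E) r) = 1 →
      ENNReal.ofReal (ballMassConst β₀ ^ finrank ℝ E) ≤
        ∫⁻ x in S ∩ L ⁻¹' ball (L z) r, ENNReal.ofReal (V x ^ (-β)) := by
  set n := finrank ℝ E with hn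
  have hn₀ : 0 < n := finrank_pos
  have hβpos : 0 < β := lt_of_lt_of_le (by positivity) hβ
  have hshells := setLIntegral_rpow_neg_le hS hV hVpos hβ₀ hβ hx₀ hmax
  rw [← hn, hmass] at hshells
  set a := V x₀ ^ (-β)
  set W := sublevelSet S V (V x₀ + V x₀ * (n / β))
  have hW : IsOpen W := isOpen_sublevelSet hS hV _
  have hWne : W.Nonempty :=
    ⟨x₀, hx₀, lt_add_of_pos_right _ (mul_pos (hVpos x₀ hx₀) (by positivity))⟩
  have hWvol : volume W ≤ ENNReal.ofReal ((2 * exp 1) ^ n) :=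
    measure_sublevelSet_le hn₀.ne' hVpos hx₀ hβpos hW.measurableSet hmass.le hhalf
  obtain ⟨L, z, hdet, hcapture⟩ := exists_abs_det_eq_one_le_volume_inter_preimage_ball hW
    (hV.convex_lt _) hWne (by positivity) hWvol
  refine ⟨L, z, hdet, fun r hr hball => ?_⟩
  calc ENNReal.ofReal (ballMassConst β₀ ^ n)
      ≤ ENNReal.ofReal (ballMassConst β₀ ^ n) *
          (ENNReal.ofReal (a * massConst β₀ ^ n) * volume W) := le_mul_of_one_le_right' hshells
    _ = ENNReal.ofReal (a * exp (-n)) *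
          (ENNReal.ofReal (captureConst (2 * exp 1) ^ n) * volume W) := by
        rw [← mul_assoc, ← mul_assoc,
          ← ENNReal.ofReal_mul (pow_nonneg (ballMassConst_pos hβ₀).le n),
          ← ENNReal.ofReal_mul (by positivity), ballMassConst_pow_mul hβ₀]
    _ ≤ ENNReal.ofReal (a * exp (-n)) * volume (W ∩ L ⁻¹' ball (L z) r) := by
        gcongr
        exact hcapture r hr hball
    _ ≤ ∫⁻ x in W ∩ L ⁻¹' ball (L z) r, ENNReal.ofReal (V x ^ (-β)) :=
        mul_measure_le_setLIntegral_rpow_neg hVpos hx₀ hβpos n.cast_nonneg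
          (hW.measurableSet.inter (L.measurable measurableSet_ball)) Set.inter_subset_left
    _ ≤ ∫⁻ x in S ∩ L ⁻¹' ball (L z) r, ENNReal.ofReal (V x ^ (-β)) :=
        lintegral_mono_set (Set.inter_subset_inter_left _ (Set.sep_subset _ _))

end BallMass

theorem exists_abs_det_eq_one_le_setLIntegral {n : ℕ} (hn : 1 ≤ n) {β β₀ : ℝ} (hβ₀ : 1 < β₀)
    (hβ : β₀ * n ≤ β) {f : EuclideanSpace ℝ (Fin n) → ℝ} (hf : ConvexForm f β)
    (hint : ∫⁻ x, ENNReal.ofReal (f x) = 1) (hsup : 1 ≤ densSup f) :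
    ∃ (L : EuclideanSpace ℝ (Fin n) →L[ℝ] EuclideanSpace ℝ (Fin n))
      (z : EuclideanSpace ℝ (Fin n)), |L.det| = 1 ∧ ∀ r : ℝ, 0 < r →
        volume (ball (0 : EuclideanSpace ℝ (Fin n)) r) = 1 →
          ENNReal.ofReal (ballMassConst β₀ ^ n) ≤
            ∫⁻ x in L ⁻¹' ball (L z) r, ENNReal.ofReal (f x) := by
  obtain ⟨S, V, hS, -, hV, hVpos, hfV, hf₀⟩ := hf
  have : NeZero n := ⟨by omega⟩
  obtain ⟨x₀, hx₀, hmax⟩ := exists_half_lt_and_ae_le_two_mul (one_pos.trans_le hsup)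
  have hhalf : 1 / 2 ≤ f x₀ := le_trans (by unfold densSup at hsup; linarith) hx₀.le
  have hx₀S : x₀ ∈ S := by
    by_contra hx₀S
    linarith [hf₀ x₀ hx₀S]
  have hdensity : ∀ x ∈ S, ENNReal.ofReal (f x) = ENNReal.ofReal (V x ^ (-β)) :=
    fun x hx => by rw [hfV x hx]
  have hmass : ∫⁻ x in S, ENNReal.ofReal (V x ^ (-β)) = 1 := by
    rw [← hint, ← setLIntegral_congr_fun hS.measurableSet hdensity]
    exact setLIntegral_eq_of_support_subset (Function.support_subset_iff'.2 fun x hx => by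
      rw [hf₀ x hx, ENNReal.ofReal_zero])
  have hmaxV : ∀ᵐ x ∂volume.restrict S, V x ^ (-β) ≤ 2 * V x₀ ^ (-β) := by
    filter_upwards [ae_restrict_of_ae hmax, ae_restrict_mem hS.measurableSet] with x hx hxS
    rwa [← hfV x hxS, ← hfV x₀ hx₀S]
  obtain ⟨L, z, hdet, hball⟩ := exists_abs_det_eq_one_le_setLIntegral_rpow_neg hS hV hVpos hβ₀
    (by rwa [finrank_euclideanSpace_fin]) hx₀S hmass (hfV x₀ hx₀S ▸ hhalf) hmaxV
  rw [finrank_euclideanSpace_fin] at hball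
  refine ⟨L, z, hdet, fun r hr hvol => (hball r hr hvol).trans ?_⟩
  rw [← setLIntegral_congr_fun (hS.measurableSet.inter (L.measurable measurableSet_ball))
    fun x hx => hdensity x hx.1]
  exact lintegral_mono_set Set.inter_subset_right

end MPosition

theorem statement15_general (β₀ : ℝ) (hβ₀ : 1 < β₀) :
    ∃ c₀ : ℝ, 0 < c₀ ∧ c₀ < 1 ∧
      ∀ (n : ℕ), 1 ≤ n → ∀ β : ℝ, β₀ * n ≤ β →
      ∀ (μ : Measure (EuclideanSpace ℝ (Fin n)))
        (f : EuclideanSpace ℝ (Fin n) → ℝ),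
        μ = volume.withDensity (fun x => ENNReal.ofReal (f x)) →
        IsProbabilityMeasure μ → ConvexForm f β → 1 ≤ densSup f →
        ∃ u : EuclideanSpace ℝ (Fin n) →ᵃ[ℝ] EuclideanSpace ℝ (Fin n),
          |LinearMap.det u.linear| = 1 ∧
          ∀ r : ℝ, 0 < r →
            volume (Metric.ball (0 : EuclideanSpace ℝ (Fin n)) r) = 1 →
            ENNReal.ofReal (c₀ ^ n) ≤ Measure.map u μ (Metric.ball 0 r) := by
  refine ⟨MPosition.ballMassConst β₀, MPosition.ballMassConst_pos hβ₀,
    MPosition.ballMassConst_lt_one hβ₀, ?_⟩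
  intro n hn β hβ μ f hμ hprob hf hsup
  have hint : ∫⁻ x, ENNReal.ofReal (f x) = 1 := by
    rw [← setLIntegral_univ, ← withDensity_apply _ MeasurableSet.univ, ← hμ, measure_univ]
  obtain ⟨L, z, hdet, hball⟩ :=
    MPosition.exists_abs_det_eq_one_le_setLIntegral hn hβ₀ hβ hf hint hsup
  let u := L.toLinearMap.toAffineMap - AffineMap.const ℝ _ (L z)
  have hu : Continuous u := L.continuous.sub continuous_const
  have hpreimage (r : ℝ) : u ⁻¹' Metric.ball 0 r = L ⁻¹' Metric.ball (L z) r := by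
    ext y
    simp [u, dist_eq_norm]
  refine ⟨u, by simpa [u] using hdet, fun r hr hvol => ?_⟩
  rw [hμ, Measure.map_apply hu.measurable measurableSet_ball,
    withDensity_apply _ (hu.measurable measurableSet_ball), hpreimage r]
  exact hball r hr hvol

/-- M-position for convex measures (Proposition 6.2): a sufficiently convex probability
measure with ‖f‖ ≥ 1 can be put, by an (affine) volume preserving map, in a position where
it gives mass at least c₀ⁿ to the Euclidean ball of volume one centered at the origin. -/
theorem statement15 (β₀ : ℝ) (hβ₀ : 1 < β₀) :
    ∃ c₀ : ℝ, 0 < c₀ ∧ c₀ < 1 ∧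
      ∀ (n : ℕ), 1 ≤ n → ∀ β : ℝ, (n : ℝ) + 1 ≤ β → β₀ * n ≤ β →
      ∀ (μ : Measure (EuclideanSpace ℝ (Fin n)))
        (f : EuclideanSpace ℝ (Fin n) → ℝ),
        μ = volume.withDensity (fun x => ENNReal.ofReal (f x)) →
        IsProbabilityMeasure μ → ConvexForm f β → 1 ≤ densSup f →
        ∃ u : EuclideanSpace ℝ (Fin n) →ᵃ[ℝ] EuclideanSpace ℝ (Fin n),
          |LinearMap.det u.linear| = 1 ∧
          ∀ r : ℝ, 0 < r →
            volume (Metric.ball (0 : EuclideanSpace ℝ (Fin n)) r) = 1 →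
            ENNReal.ofReal (c₀ ^ n) ≤ Measure.map u μ (Metric.ball 0 r) := by
  obtain ⟨c₀, hpos, hlt, h⟩ := statement15_general β₀ hβ₀
  exact ⟨c₀, hpos, hlt, fun n hn β _ => h n hn β⟩
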